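/- arXiv:1109.4774 — 3 statements merged into one kernel-verified Lean document; each statement's English description precedes it below -/
import Mathlib

section
/- Let V be a seven-dimensional real vector space and let Ψ ∈ Λ⁴V* be a four-form for which there exists a basis e¹,…,e⁷ of V* with Ψ = e^{1234}+e^{1256}+e^{3456}−e^{2467}+e^{2357}+e^{1457}+e^{1367} (i.e. Ψ is the Hodge dual of a G₂-structure). Let α ∈ V* be nonzero and let W be any complement of span(α) in V*, and let Ω ∈ Λ⁴W and ρ ∈ Λ³W be the unique forms with Ψ = Ω + ρ∧α. Then (ρ(Ω), l(Ω), m(Ω), r(Ω)) = (6,3,2,1) and (ρ(ρ), l(ρ), m(ρ), r(ρ)) = (6,3,2,2), where the invariants of Ω and ρ are computed in the exterior algebra of the six-dimensional space W. -/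
open Module

section Machinery

variable {F : Type*} [Field F] {M : Type*} [AddCommGroup M] [Module F M]

/-- `X` is a decomposable `k`-vector, with factors taken from the ambient subspace `A`. -/
def Dec (A : Submodule F M) (k : ℕ) (X : ExteriorAlgebra F M) : Prop :=
  ∃ v : Fin k → M, (∀ i, v i ∈ A) ∧ X = (List.ofFn fun i => ExteriorAlgebra.ι F (v i)).prod

/-- `X` is a sum of `l` decomposable `k`-vectors with factors from `A`. -/
def LenLE (A : Submodule F M) (k l : ℕ) (X : ExteriorAlgebra F M) : Prop :=
  ∃ Y : Fin l → ExteriorAlgebra F M, (∀ i, Dec A k (Y i)) ∧ X = ∑ i, Y i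

/-- `X` has (irreducible) length `l` as a `k`-vector: it is a sum of `l` decomposable
`k`-vectors, and of no smaller number of them. -/
def HasLen (A : Submodule F M) (k l : ℕ) (X : ExteriorAlgebra F M) : Prop :=
  LenLE A k l X ∧ ∀ j < l, ¬ LenLE A k j X

/-- The (irreducible) length of the `k`-vector `X`. -/
noncomputable def len (A : Submodule F M) (k : ℕ) (X : ExteriorAlgebra F M) : ℕ :=
  sInf {l | LenLE A k l X}

/-- `X` belongs to `Λ^k W`, regarded as a subspace of the exterior algebra. -/
def memPow (W : Submodule F M) (k : ℕ) (X : ExteriorAlgebra F M) : Prop :=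
  X ∈ (W.map (ExteriorAlgebra.ι F)) ^ k

/-- The support `[X]` of the `k`-vector `X`: the intersection of all subspaces `W`
with `X ∈ Λ^k W`. -/
noncomputable def supp (k : ℕ) (X : ExteriorAlgebra F M) : Submodule F M :=
  sInf {W | memPow W k X}

/-- The rank `ρ(X) = dim [X]` of the `k`-vector `X`. -/
noncomputable def rkInv (k : ℕ) (X : ExteriorAlgebra F M) : ℕ :=
  Module.finrank F (supp k X)

/-- `(v, W, X₁, X₂)` is an admissible splitting `X = X₁ ∧ v + X₂` of the `k`-vector `X`:
`v ∈ [X] ∖ {0}`, `W` is a complement of `span v` in `[X]`, `X₁ ∈ Λ^(k-1) W` and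
`X₂ ∈ Λ^k W`. -/
def Split (k : ℕ) (X : ExteriorAlgebra F M) (v : M) (W : Submodule F M)
    (X₁ X₂ : ExteriorAlgebra F M) : Prop :=
  v ∈ supp k X ∧ v ≠ 0 ∧
    W ⊔ Submodule.span F {v} = supp k X ∧ W ⊓ Submodule.span F {v} = ⊥ ∧
    memPow W (k - 1) X₁ ∧ memPow W k X₂ ∧
    X = X₁ * ExteriorAlgebra.ι F v + X₂

/-- The invariant `m(X) = min { l(X₁) }` over all admissible splittings of `X`. -/
noncomputable def mInv (A : Submodule F M) (k : ℕ) (X : ExteriorAlgebra F M) : ℕ :=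
  sInf {l | ∃ v W X₁ X₂, Split k X v W X₁ X₂ ∧ HasLen A (k - 1) l X₁}

/-- The invariant `r(X) = min { l(X₂) }` over all admissible splittings of `X`. -/
noncomputable def rInv (A : Submodule F M) (k : ℕ) (X : ExteriorAlgebra F M) : ℕ :=
  sInf {l | ∃ v W X₁ X₂, Split k X v W X₁ X₂ ∧ HasLen A k l X₂}

end Machinery

/-- The wedge product `b i ∧ b j ∧ b k ∧ b l` of four vectors. -/
noncomputable def wedge4 {F : Type*} [Field F] {M : Type*} [AddCommGroup M] [Module F M]
    (b : Fin 7 → M) (i j k l : Fin 7) : ExteriorAlgebra F M :=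
  ExteriorAlgebra.ι F (b i) * ExteriorAlgebra.ι F (b j) *
    ExteriorAlgebra.ι F (b k) * ExteriorAlgebra.ι F (b l)

/-- The four-form `e^{1234}+e^{1256}+e^{3456}-e^{2467}+e^{2357}+e^{1457}+e^{1367}`
(the Hodge dual of a `G₂`-structure), written with `0`-based indices. -/
noncomputable def PsiPlus {F : Type*} [Field F] {M : Type*} [AddCommGroup M] [Module F M]
    (e : Fin 7 → M) : ExteriorAlgebra F M :=
  wedge4 e 0 1 2 3 + wedge4 e 0 1 4 5 + wedge4 e 2 3 4 5 - wedge4 e 1 3 5 6 +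
    wedge4 e 1 2 4 6 + wedge4 e 0 3 4 6 + wedge4 e 0 2 5 6

/-!
The contraction of `X` with a linear form that kills all the factors of one summand of a splitting
of `X` removes that summand. So if the contraction of `X ∈ Λ^k W` with a linear form that does not
vanish on `W` is never decomposable, then `W` is the support of `X`, and neither `X` nor the parts
of its splittings can be short.

The frames adapted to `Ψ` can be rotated by unit quaternions acting on a coassociative
four-dimensional part, and by the cyclic shift of the three complex coordinates. These motions move
any covector to a multiple of `e⁷`, and any vector to a multiple of the one dual to `e⁷`. As
`Ψ = ω² / 2 + Im vol ∧ e⁷`, with `ω` the Kähler form and `vol` the complex volume form of the first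
six covectors, projecting `Ψ` to `W` along `α` shows that `Ω` is `ω² / 2` for some frame of `W`, and
contracting `Ψ` with a linear form of kernel `W` shows that `ρ` is `Im vol` for some frame of `W`.

Decomposable multivectors of positive degree square to zero. This makes the contractions of both
normal forms indecomposable, because `ω³ ≠ 0` and because the squares of the contractions of
`Im vol` detect sums of two squares.
-/

open ExteriorAlgebra (ι)

section Contraction

variable {R : Type*} [CommRing R] {M : Type*} [AddCommGroup M] [Module R M]

/-- The interior product of multivectors with the linear form `d`, acting from the right: on
`X * ι R a` it starts by pairing `d` with the last factor `a`. -/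
noncomputable def contract (d : Dual R M) : ExteriorAlgebra R M →ₗ[R] ExteriorAlgebra R M :=
  (CliffordAlgebra.contractRight (Q := (0 : QuadraticForm R M))).flip d

theorem contract_mul_ι (d : Dual R M) (X : ExteriorAlgebra R M) (a : M) :
    contract d (X * ι R a) = d a • X - contract d X * ι R a :=
  CliffordAlgebra.contractRight_mul_ι (Q := (0 : QuadraticForm R M)) (d := d) a X

theorem contract_algebraMap (d : Dual R M) (r : R) :
    contract d (algebraMap R (ExteriorAlgebra R M) r) = 0 :=
  CliffordAlgebra.contractRight_algebraMap (Q := (0 : QuadraticForm R M)) d r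

theorem contract_ι (d : Dual R M) (a : M) : contract d (ι R a) = algebraMap R _ (d a) :=
  CliffordAlgebra.contractRight_ι (Q := (0 : QuadraticForm R M)) d a

theorem ι_mul_ι_swap (a b : M) : ι R a * ι R b = -(ι R b * ι R a) :=
  eq_neg_of_add_eq_zero_left (ExteriorAlgebra.ι_add_mul_swap a b)

theorem mul_ι_mul_ι_self (X : ExteriorAlgebra R M) (a : M) : X * ι R a * ι R a = 0 := by
  rw [mul_assoc, ExteriorAlgebra.ι_sq_zero, mul_zero]

theorem mul_ι_mul_ι_swap (X : ExteriorAlgebra R M) (a b : M) :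
    X * ι R a * ι R b = -(X * ι R b * ι R a) := by
  rw [mul_assoc, ι_mul_ι_swap, mul_neg, mul_assoc]

end Contraction

section Homogeneous

variable {F : Type*} [Field F] {M : Type*} [AddCommGroup M] [Module F M]
  {U : Submodule F M} {k : ℕ} {X Y : ExteriorAlgebra F M}

theorem memPow.mul_ι {a : M} (hX : memPow U k X) (ha : a ∈ U) : memPow U (k + 1) (X * ι F a) := by
  rw [memPow, pow_succ]
  exact Submodule.mul_mem_mul hX (Submodule.mem_map_of_mem ha)

theorem memPow_one_iff : memPow U 1 X ↔ ∃ a ∈ U, ι F a = X := by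
  rw [memPow, pow_one, Submodule.mem_map]

theorem memPow.memPow_contract (hX : memPow U (k + 1) X) (d : Dual F M) :
    memPow U k (contract d X) := by
  induction k generalizing X with
  | zero =>
    obtain ⟨a, -, rfl⟩ := memPow_one_iff.1 hX
    rw [contract_ι, memPow, pow_zero]
    exact Submodule.algebraMap_mem _
  | succ k ih =>
    rw [memPow, pow_succ] at hX
    induction hX using Submodule.mul_induction_on' with
    | mem_mul_mem Y hY _ ha =>
      obtain ⟨a, ha, rfl⟩ := ha
      rw [contract_mul_ι]
      exact Submodule.sub_mem _ (Submodule.smul_mem _ _ hY) ((ih hY).mul_ι ha)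
    | add X _ Y _ hX hY =>
      rw [map_add]
      exact Submodule.add_mem _ hX hY

theorem memPow.contract_mul (hY : memPow U k Y) (d : Dual F M) (X : ExteriorAlgebra F M) :
    contract d (X * Y) = X * contract d Y + (-1 : F) ^ k • (contract d X * Y) := by
  induction hY using Submodule.pow_induction_on_right' generalizing X with
  | algebraMap r =>
    simp only [contract_algebraMap, ← Algebra.commutes r, ← Algebra.smul_def, map_smul, mul_zero,
      zero_add, pow_zero, one_smul]
  | add Y Z _ _ _ hY hZ =>
    simp only [mul_add, map_add, hY, hZ, smul_add]
    abel
  | mul_mem k Y _ ih _ ha =>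
    obtain ⟨a, -, rfl⟩ := ha
    rw [← mul_assoc, contract_mul_ι, contract_mul_ι, ih, pow_succ]
    simp only [mul_sub, add_mul, smul_mul_assoc, mul_smul_comm, mul_assoc]
    module

theorem memPow.mul_ι_comm (hX : memPow U k X) (a : M) :
    X * ι F a = (-1 : F) ^ k • (ι F a * X) := by
  induction hX using Submodule.pow_induction_on_right' with
  | algebraMap r => rw [Algebra.commutes, pow_zero, one_smul]
  | add X Y _ _ _ hX hY => rw [add_mul, mul_add, hX, hY, smul_add]
  | mul_mem k X _ ih _ hb =>
    obtain ⟨b, -, rfl⟩ := hb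
    rw [mul_ι_mul_ι_swap, ih, pow_succ, smul_mul_assoc, mul_assoc]
    module

theorem memPow.contract_eq_zero (hX : memPow U k X) {d : Dual F M} (hd : ∀ a ∈ U, d a = 0) :
    contract d X = 0 := by
  induction hX using Submodule.pow_induction_on_right' with
  | algebraMap r => exact contract_algebraMap d r
  | add X Y _ _ _ hX hY => rw [map_add, hX, hY, add_zero]
  | mul_mem _ X _ ih _ ha =>
    obtain ⟨a, ha, rfl⟩ := ha
    rw [contract_mul_ι, hd a ha, ih, zero_smul, zero_mul, sub_zero]

theorem memPow.map_eq_self (hX : memPow U k X) {p : M →ₗ[F] M} (hp : ∀ a ∈ U, p a = a) :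
    ExteriorAlgebra.map p X = X := by
  induction hX using Submodule.pow_induction_on_right' with
  | algebraMap r => exact AlgHom.commutes _ r
  | add X Y _ _ _ hX hY => rw [map_add, hX, hY]
  | mul_mem _ X _ ih _ ha =>
    obtain ⟨a, ha, rfl⟩ := ha
    rw [map_mul, ih, ExteriorAlgebra.map_apply_ι, hp a ha]

end Homogeneous

section Decomposable

variable {F : Type*} [Field F] {M : Type*} [AddCommGroup M] [Module F M]
  {A B : Submodule F M} {k : ℕ} {X : ExteriorAlgebra F M}

theorem dec_zero_iff : Dec A 0 X ↔ X = 1 := by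
  simp [Dec]

theorem dec_succ_iff : Dec A (k + 1) X ↔ ∃ Y a, Dec A k Y ∧ a ∈ A ∧ X = Y * ι F a := by
  constructor
  · rintro ⟨v, hv, rfl⟩
    exact ⟨_, v (Fin.last k), ⟨fun i => v i.castSucc, fun i => hv _, rfl⟩, hv _, by
      rw [List.ofFn_succ', List.concat_eq_append, List.prod_append, List.prod_singleton]⟩
  · rintro ⟨_, a, ⟨v, hv, rfl⟩, ha, rfl⟩
    refine ⟨Fin.snoc v a, Fin.lastCases (by simpa using ha) (by simpa using hv), ?_⟩
    rw [List.ofFn_succ', List.concat_eq_append, List.prod_append, List.prod_singleton]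
    simp only [Fin.snoc_castSucc, Fin.snoc_last]

theorem Dec.mul_ι {a : M} (hX : Dec A k X) (ha : a ∈ A) : Dec A (k + 1) (X * ι F a) :=
  dec_succ_iff.2 ⟨X, a, hX, ha, rfl⟩

theorem dec_ι {a : M} (ha : a ∈ A) : Dec A 1 (ι F a) :=
  dec_succ_iff.2 ⟨1, a, dec_zero_iff.2 rfl, ha, (one_mul _).symm⟩

theorem Dec.smul (hX : Dec A (k + 1) X) (c : F) : Dec A (k + 1) (c • X) := by
  obtain ⟨Y, a, hY, ha, rfl⟩ := dec_succ_iff.1 hX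
  rw [← mul_smul_comm, ← map_smul]
  exact hY.mul_ι (A.smul_mem c ha)

theorem dec_zero : Dec A (k + 1) 0 :=
  ⟨0, fun _ => A.zero_mem, by simp [List.ofFn_succ]⟩

theorem Dec.mono (hX : Dec A k X) (hAB : A ≤ B) : Dec B k X :=
  hX.imp fun _ hv => ⟨fun i => hAB (hv.1 i), hv.2⟩

theorem Dec.memPow (hX : Dec A k X) : memPow A k X := by
  induction k generalizing X with
  | zero => exact dec_zero_iff.1 hX ▸ Submodule.one_le.1 (pow_zero _).ge
  | succ k ih =>
    obtain ⟨Y, a, hY, ha, rfl⟩ := dec_succ_iff.1 hX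
    exact (ih hY).mul_ι ha

theorem Dec.exists_memPow_span_range (hX : Dec A k X) :
    ∃ v : Fin k → M, _root_.memPow (Submodule.span F (Set.range v)) k X :=
  let ⟨v, _, hv⟩ := hX
  ⟨v, Dec.memPow ⟨v, fun i => Submodule.subset_span ⟨i, rfl⟩, hv⟩⟩

theorem Dec.exists_contract_eq_zero_of_mul_ι (hX : Dec A k X) {a : M} (ha : a ∈ A)
    {d : Dual F M} (hda : d a ≠ 0) :
    ∃ Y, Dec A k Y ∧ Y * ι F a = X * ι F a ∧ contract d Y = 0 := by
  induction k generalizing X with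
  | zero =>
    obtain rfl := dec_zero_iff.1 hX
    exact ⟨1, hX, rfl, by rw [← map_one (algebraMap F _), contract_algebraMap]⟩
  | succ k ih =>
    obtain ⟨Z, b, hZ, hb, rfl⟩ := dec_succ_iff.1 hX
    obtain ⟨Y, hY, hYa, hdY⟩ := ih hZ
    refine ⟨Y * ι F (b - (d b / d a) • a), hY.mul_ι (A.sub_mem hb (A.smul_mem _ ha)), ?_, ?_⟩
    · rw [mul_ι_mul_ι_swap, hYa, map_sub, map_smul, mul_sub, mul_smul_comm, mul_ι_mul_ι_self,
        smul_zero, sub_zero, mul_ι_mul_ι_swap Z b]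
    · rw [contract_mul_ι, hdY, zero_mul, sub_zero, map_sub, map_smul, smul_eq_mul,
        div_mul_cancel₀ _ hda, sub_self, zero_smul]

theorem Dec.exists_contract_eq_smul (hX : Dec A (k + 1) X) (d : Dual F M) :
    ∃ (c : F) (Y : ExteriorAlgebra F M), Dec A k Y ∧ contract d X = c • Y := by
  induction k generalizing X with
  | zero =>
    obtain ⟨a, -, rfl⟩ := memPow_one_iff.1 hX.memPow
    exact ⟨d a, 1, dec_zero_iff.2 rfl, by rw [contract_ι, Algebra.algebraMap_eq_smul_one]⟩
  | succ k ih =>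
    obtain ⟨Y, a, hY, ha, rfl⟩ := dec_succ_iff.1 hX
    by_cases hda : d a = 0
    · obtain ⟨c, Z, hZ, hcZ⟩ := ih hY
      refine ⟨-c, Z * ι F a, hZ.mul_ι ha, ?_⟩
      rw [contract_mul_ι, hda, hcZ, zero_smul, zero_sub, smul_mul_assoc, neg_smul]
    · obtain ⟨Z, hZ, hZa, hdZ⟩ := hY.exists_contract_eq_zero_of_mul_ι ha hda
      exact ⟨d a, Z, hZ, by rw [← hZa, contract_mul_ι, hdZ, zero_mul, sub_zero]⟩

theorem Dec.dec_contract (hX : Dec A (k + 2) X) (d : Dual F M) : Dec A (k + 1) (contract d X) := by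
  obtain ⟨c, Y, hY, h⟩ := hX.exists_contract_eq_smul d
  exact h ▸ hY.smul c

theorem Dec.mul_self_eq_zero (hX : Dec A (k + 1) X) : X * X = 0 := by
  obtain ⟨Y, a, hY, -, rfl⟩ := dec_succ_iff.1 hX
  nth_rw 2 [hY.memPow.mul_ι_comm]
  rw [mul_smul_comm, ← mul_assoc, mul_ι_mul_ι_self, zero_mul, smul_zero]

end Decomposable

section Length

variable {F : Type*} [Field F] {M : Type*} [AddCommGroup M] [Module F M]
  {A B : Submodule F M} {k l l' : ℕ} {X Y : ExteriorAlgebra F M}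

theorem lenLE_zero_iff : LenLE A k 0 X ↔ X = 0 := by
  simp [LenLE]

theorem lenLE_succ_iff : LenLE A k (l + 1) X ↔ ∃ Y Z, LenLE A k l Y ∧ Dec A k Z ∧ X = Y + Z := by
  constructor
  · rintro ⟨Y, hY, rfl⟩
    exact ⟨_, Y (Fin.last l), ⟨fun i => Y i.castSucc, fun i => hY _, rfl⟩, hY _,
      Fin.sum_univ_castSucc Y⟩
  · rintro ⟨_, Z, ⟨Y, hY, rfl⟩, hZ, rfl⟩
    refine ⟨Fin.snoc Y Z, Fin.lastCases (by simpa using hZ) (by simpa using hY), ?_⟩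
    simp only [Fin.sum_univ_castSucc, Fin.snoc_castSucc, Fin.snoc_last]

theorem lenLE_one_iff : LenLE A k 1 X ↔ Dec A k X := by
  simp [lenLE_succ_iff, lenLE_zero_iff]

theorem LenLE.add_dec (hX : LenLE A k l X) (hY : Dec A k Y) : LenLE A k (l + 1) (X + Y) :=
  lenLE_succ_iff.2 ⟨X, Y, hX, hY, rfl⟩

theorem Dec.lenLE_one (hX : Dec A k X) : LenLE A k 1 X :=
  lenLE_one_iff.2 hX

theorem LenLE.mono (hX : LenLE A k l X) (hAB : A ≤ B) : LenLE B k l X :=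
  hX.imp fun _ hY => ⟨fun i => (hY.1 i).mono hAB, hY.2⟩

theorem LenLE.mono_length (hX : LenLE A (k + 1) l X) (hl : l ≤ l') : LenLE A (k + 1) l' X := by
  induction hl with
  | refl => exact hX
  | step _ ih => exact add_zero X ▸ ih.add_dec dec_zero

theorem LenLE.memPow (hX : LenLE A k l X) : memPow A k X := by
  obtain ⟨Y, hY, rfl⟩ := hX
  exact Submodule.sum_mem _ fun i _ => (hY i).memPow

theorem LenLE.hasLen (hX : LenLE A (k + 1) (l + 1) X) (hX' : ¬LenLE A (k + 1) l X) :
    HasLen A (k + 1) (l + 1) X :=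
  ⟨hX, fun _ hj hXj => hX' (hXj.mono_length (Nat.lt_succ_iff.1 hj))⟩

theorem len_eq_of_lenLE (hX : LenLE A (k + 1) (l + 1) X) (hX' : ¬LenLE A (k + 1) l X) :
    len A (k + 1) X = l + 1 :=
  IsLeast.csInf_eq ⟨hX, fun _ hj => Nat.lt_of_not_le fun hjl => hX' (hj.mono_length hjl)⟩

variable {v : M} {U : Submodule F M} {X₁ X₂ : ExteriorAlgebra F M}

theorem mInv_eq_of_split (hS : Split (k + 2) X v U X₁ X₂) (hX₁ : LenLE A (k + 1) (l + 1) X₁)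
    (hmin : ∀ v U X₁ X₂, Split (k + 2) X v U X₁ X₂ → ¬LenLE A (k + 1) l X₁) :
    mInv A (k + 2) X = l + 1 := by
  refine IsLeast.csInf_eq ⟨⟨v, U, X₁, X₂, hS, hX₁.hasLen (hmin _ _ _ _ hS)⟩, ?_⟩
  rintro j ⟨v, U, X₁, X₂, hS, hj, -⟩
  exact Nat.lt_of_not_le fun hjl => hmin _ _ _ _ hS (hj.mono_length hjl)

theorem rInv_eq_of_split (hS : Split (k + 1) X v U X₁ X₂) (hX₂ : LenLE A (k + 1) (l + 1) X₂)
    (hmin : ∀ v U X₁ X₂, Split (k + 1) X v U X₁ X₂ → ¬LenLE A (k + 1) l X₂) :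
    rInv A (k + 1) X = l + 1 := by
  refine IsLeast.csInf_eq ⟨⟨v, U, X₁, X₂, hS, hX₂.hasLen (hmin _ _ _ _ hS)⟩, ?_⟩
  rintro j ⟨v, U, X₁, X₂, hS, hj, -⟩
  exact Nat.lt_of_not_le fun hjl => hmin _ _ _ _ hS (hj.mono_length hjl)

theorem span_range_tail_le {n : ℕ} (f : Fin (n + 1) → M) :
    Submodule.span F (Set.range (Fin.tail f)) ≤ Submodule.span F (Set.range f) :=
  Submodule.span_mono (Set.range_comp_subset_range Fin.succ f)

theorem split_of_supp_eq_span_range {n : ℕ} {f : Fin (n + 1) → M} (hf : LinearIndependent F f)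
    (hsupp : supp k X = Submodule.span F (Set.range f))
    (hX₁ : memPow (Submodule.span F (Set.range (Fin.tail f))) (k - 1) X₁)
    (hX₂ : memPow (Submodule.span F (Set.range (Fin.tail f))) k X₂)
    (hX : X = X₁ * ι F (f 0) + X₂) :
    Split k X (f 0) (Submodule.span F (Set.range (Fin.tail f))) X₁ X₂ := by
  refine ⟨hsupp ▸ Submodule.subset_span ⟨0, rfl⟩, hf.ne_zero 0, ?_, ?_, hX₁, hX₂, hX⟩
  · rw [hsupp, ← Fin.cons_self_tail f, Fin.range_cons, Submodule.span_insert, sup_comm,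
      Fin.tail_cons, Fin.cons_zero]
  · exact ((Submodule.disjoint_span_singleton' (hf.ne_zero 0)).2
      (linearIndependent_finSucc.1 hf).2).eq_bot

theorem Split.notMem (hS : Split k X v U X₁ X₂) : v ∉ U := fun hv =>
  hS.2.1 <| (Submodule.mem_bot F).1 <|
    hS.2.2.2.1 ▸ Submodule.mem_inf.2 ⟨hv, Submodule.mem_span_singleton_self v⟩

end Length

section IndecomposableContractions

variable {F : Type*} [Field F] {M : Type*} [AddCommGroup M] [Module F M]
  {A W U : Submodule F M} {k : ℕ} {X X₁ X₂ : ExteriorAlgebra F M} {v : M}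

theorem exists_dual_ne_zero_of_lt_finrank {n : ℕ} (u : Fin n → M) (hn : n < finrank F W) :
    ∃ d : Dual F M, (∀ a ∈ Submodule.span F (Set.range u), d a = 0) ∧ ∃ w ∈ W, d w ≠ 0 := by
  obtain ⟨w, hw, hwu⟩ : ∃ w ∈ W, w ∉ Submodule.span F (Set.range u) := by
    by_contra! hle
    have hspan : finrank F (Submodule.span F (Set.range u)) ≤ n :=
      (finrank_range_le_card u).trans (Fintype.card_fin n).le
    have := FiniteDimensional.span_of_finite F (Set.finite_range u)
    exact hn.not_ge ((Submodule.finrank_mono hle).trans hspan)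
  obtain ⟨d, hdw, hd⟩ := Submodule.exists_le_ker_of_notMem hwu
  exact ⟨d, hd, w, hw, hdw⟩

/-- `X ∈ Λ^(k+1) W` and the contraction of `X` with a linear form that does not vanish on `W` is
never decomposable. This bounds from below the lengths of `X` and of the parts of its splittings. -/
structure HasIndecContractions (W : Submodule F M) (k : ℕ) (X : ExteriorAlgebra F M) : Prop where
  mem : memPow W (k + 1) X
  eq_zero_of_dec_contract : ∀ d : Dual F M, Dec ⊤ k (contract d X) → ∀ w ∈ W, d w = 0

namespace HasIndecContractions

theorem supp_eq (hX : HasIndecContractions W (k + 1) X) : supp (k + 2) X = W := by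
  refine le_antisymm (sInf_le hX.mem) (le_sInf fun U (hU : memPow U (k + 2) X) w hw => ?_)
  by_contra hwU
  obtain ⟨d, hdw, hd⟩ := Submodule.exists_le_ker_of_notMem hwU
  have hdX : contract d X = 0 := hU.contract_eq_zero hd
  exact hdw (hX.eq_zero_of_dec_contract d (hdX ▸ dec_zero) w hw)

theorem not_lenLE_two (hX : HasIndecContractions W (k + 1) X) (hW : k + 2 < finrank F W) :
    ¬LenLE A (k + 2) 2 X := by
  intro h
  obtain ⟨Y, Z, hY, hZ, rfl⟩ := lenLE_succ_iff.1 h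
  obtain ⟨u, hu⟩ := hZ.exists_memPow_span_range
  obtain ⟨d, hd, w, hw, hdw⟩ := exists_dual_ne_zero_of_lt_finrank u hW
  refine hdw (hX.eq_zero_of_dec_contract d ?_ w hw)
  rw [map_add, hu.contract_eq_zero hd, add_zero]
  exact ((lenLE_one_iff.1 hY).dec_contract d).mono le_top

theorem not_lenLE_one_left (hX : HasIndecContractions W (k + 1) X)
    (hS : Split (k + 2) X v U X₁ X₂) : ¬LenLE A (k + 1) 1 X₁ := by
  intro h
  obtain ⟨d, hdv, hd⟩ := Submodule.exists_le_ker_of_notMem hS.notMem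
  have hdX : contract d X = d v • X₁ := by
    obtain ⟨-, -, -, -, hX₁, hX₂, rfl⟩ := hS
    rw [map_add, contract_mul_ι, memPow.contract_eq_zero hX₁ hd, memPow.contract_eq_zero hX₂ hd,
      zero_mul, sub_zero, add_zero]
  have hdec : Dec ⊤ (k + 1) (contract d X) := hdX ▸ ((lenLE_one_iff.1 h).mono le_top).smul (d v)
  exact hdv (hX.eq_zero_of_dec_contract d hdec v (hX.supp_eq ▸ hS.1))

theorem not_lenLE_one_right (hX : HasIndecContractions W 2 X) (hW : 4 < finrank F W)
    (hS : Split 3 X v U X₁ X₂) : ¬LenLE A 3 1 X₂ := by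
  intro h
  obtain ⟨u, hu⟩ := (lenLE_one_iff.1 h).exists_memPow_span_range
  obtain ⟨d, hd, w, hw, hdw⟩ := exists_dual_ne_zero_of_lt_finrank (Fin.cons v u : Fin 4 → M) hW
  rw [Fin.range_cons, Submodule.span_insert] at hd
  have hdv : d v = 0 := hd v (Submodule.mem_sup_left (Submodule.mem_span_singleton_self v))
  have hdX₂ : contract d X₂ = 0 :=
    hu.contract_eq_zero fun a ha => hd a (Submodule.mem_sup_right ha)
  refine hdw (hX.eq_zero_of_dec_contract d ?_ w hw)
  obtain ⟨-, -, -, -, hX₁, -, rfl⟩ := hS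
  obtain ⟨a, -, ha⟩ := memPow_one_iff.1 (memPow.memPow_contract hX₁ d)
  rw [map_add, contract_mul_ι, hdX₂, hdv, ← ha, zero_smul, zero_sub, add_zero, ← neg_mul, ← map_neg]
  exact (dec_ι Submodule.mem_top).mul_ι Submodule.mem_top

end HasIndecContractions

end IndecomposableContractions

section SquareOfBivector

variable {F : Type*} [Field F] {M : Type*} [AddCommGroup M] [Module F M]
  {A W : Submodule F M} {X ω : ExteriorAlgebra F M}

theorem memPow.ι_mul_comm_of_two (hω : memPow W 2 ω) (a : M) : ι F a * ω = ω * ι F a := by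
  rw [hω.mul_ι_comm, neg_one_sq, one_smul]

theorem memPow.contract_mul_self (hω : memPow W 2 ω) (d : Dual F M) :
    contract d (ω * ω) = (2 : F) • (ω * contract d ω) := by
  obtain ⟨b, -, hb⟩ := memPow_one_iff.1 (hω.memPow_contract d)
  rw [hω.contract_mul, ← hb, hω.ι_mul_comm_of_two]
  module

theorem mul_self_mul_ι_eq_zero_of_dec {a : M} (hω : memPow W 2 ω) (hdec : Dec A 3 (ω * ι F a)) :
    ω * ω * ι F a = 0 := by
  by_cases ha : a = 0
  · rw [ha, map_zero, mul_zero]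
  obtain ⟨d, hda⟩ := Projective.exists_dual_ne_zero F ha
  have hsq := (hdec.dec_contract d).mul_self_eq_zero
  have hmul : contract d (ω * ι F a) * ι F a = d a • (ω * ι F a) := by
    rw [contract_mul_ι, sub_mul, mul_ι_mul_ι_self, smul_mul_assoc, sub_zero]
  have hzero : (d a * d a) • (ω * ω * ι F a) = 0 :=
    calc
      (d a * d a) • (ω * ω * ι F a) = d a • (contract d (ω * ι F a) * ι F a * ω) := by
        rw [hmul, smul_mul_assoc, smul_smul, mul_assoc, mul_assoc, hω.ι_mul_comm_of_two]
      _ = contract d (ω * ι F a) * (contract d (ω * ι F a) * ι F a) := by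
        rw [mul_assoc, hω.ι_mul_comm_of_two, ← mul_smul_comm, ← hmul]
      _ = 0 := by rw [← mul_assoc, hsq, zero_mul]
  exact (smul_eq_zero.1 hzero).resolve_left (mul_ne_zero hda hda)

theorem eq_zero_of_mul_self_mul_ι_eq_zero {a : M} (hω : memPow W 2 ω) (hω3 : ω * ω * ω ≠ 0)
    (ha : ω * ω * ι F a = 0) : a = 0 := by
  by_contra ha0
  obtain ⟨d, hda⟩ := Projective.exists_dual_ne_zero F ha0
  obtain ⟨b, -, hb⟩ := memPow_one_iff.1 (hω.memPow_contract d)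
  have hcontract : d a • (ω * ω) = (2 : F) • (ω * ι F b * ι F a) := by
    have h := congrArg (contract d) ha
    rwa [contract_mul_ι, hω.contract_mul_self, ← hb, map_zero, sub_eq_zero, smul_mul_assoc] at h
  have hmul : ω * ι F b * ι F a * ω = 0 := by
    rw [mul_assoc, hω.ι_mul_comm_of_two, mul_assoc, ← mul_assoc (ι F b), hω.ι_mul_comm_of_two,
      mul_assoc ω, ← mul_assoc ω, ι_mul_ι_swap, mul_neg, ← mul_assoc, ha, zero_mul, neg_zero]
  refine (smul_ne_zero hda hω3) ?_
  rw [← smul_mul_assoc, hcontract, smul_mul_assoc, hmul, smul_zero]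

theorem hasIndecContractions_of_mul_self [NeZero (2 : F)] (hω : memPow W 2 ω)
    (hω3 : ω * ω * ω ≠ 0) (hnd : ∀ d : Dual F M, contract d ω = 0 → ∀ w ∈ W, d w = 0)
    (hX : ω * ω = (2 : F) • X) : HasIndecContractions W 3 X := by
  have h2 : (2 : F) ≠ 0 := two_ne_zero
  constructor
  · have hωω : memPow W 4 (ω * ω) := by
      rw [memPow, pow_add _ 2 2]
      exact Submodule.mul_mem_mul hω hω
    exact (Submodule.smul_mem_iff _ h2).1 (hX ▸ hωω)
  · intro d hdec
    obtain ⟨a, -, ha⟩ := memPow_one_iff.1 (hω.memPow_contract d)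
    have hdX : contract d X = ω * ι F a := by
      have h := hω.contract_mul_self d
      rw [hX, map_smul, ← ha] at h
      exact smul_right_injective _ h2 h
    have ha0 : a = 0 := eq_zero_of_mul_self_mul_ι_eq_zero hω hω3
      (mul_self_mul_ι_eq_zero_of_dec hω (hdX ▸ hdec))
    exact hnd d (by rw [← ha, ha0, map_zero])

end SquareOfBivector

section SixDimensional

variable {F : Type*} [Field F] {M : Type*} [AddCommGroup M] [Module F M]

theorem ι_mul_ι_mul_ι_rotate (a b c : M) :
    ι F a * ι F b * ι F c = ι F c * ι F a * ι F b := by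
  rw [mul_ι_mul_ι_swap, ι_mul_ι_swap a c, neg_mul, neg_neg]

theorem commute_ι_mul_ι (a b c d : M) : Commute (ι F a * ι F b) (ι F c * ι F d) := by
  rw [Commute, SemiconjBy, ← mul_assoc, ι_mul_ι_mul_ι_rotate a b c, mul_assoc (ι F c),
    mul_assoc (ι F c), ι_mul_ι_mul_ι_rotate a b d, mul_assoc, mul_assoc]

theorem ι_mul_ι_mul_self (a b : M) : ι F a * ι F b * (ι F a * ι F b) = 0 := by
  rw [← mul_assoc, mul_ι_mul_ι_swap (ι F a), ExteriorAlgebra.ι_sq_zero, zero_mul, neg_zero,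
    zero_mul]

theorem sq_ι_mul_ι_add_ι_mul_ι (a b c d : M) :
    (ι F a * ι F b + ι F c * ι F d) * (ι F a * ι F b + ι F c * ι F d) =
      (2 : F) • (ι F a * ι F b * ι F c * ι F d) := by
  rw [mul_add, add_mul, add_mul, ι_mul_ι_mul_self, ι_mul_ι_mul_self,
    (commute_ι_mul_ι a b c d).symm.eq, ← mul_assoc]
  module

theorem ιMulti_ne_zero {n : ℕ} {f : Fin n → M} (hf : LinearIndependent F f) :
    ExteriorAlgebra.ιMulti F n f ≠ 0 := by
  have h := (exteriorPower.ιMulti_family_linearIndependent_field n hf).ne_zero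
    (Set.powersetCard.ofFinEmbEquiv (RelEmbedding.refl _))
  refine fun h0 => h (Subtype.ext ?_)
  simpa [exteriorPower.ιMulti_family] using h0

theorem ιMulti_six (f : Fin 6 → M) : ExteriorAlgebra.ιMulti F 6 f =
    ι F (f 0) * ι F (f 1) * ι F (f 2) * ι F (f 3) * ι F (f 4) * ι F (f 5) := by
  simp only [ExteriorAlgebra.ιMulti_apply, List.ofFn_succ', List.concat_eq_append, List.prod_append,
    List.ofFn_zero, List.prod_nil, List.prod_singleton, one_mul]
  rfl

variable (F) in
/-- The Kähler form `f₀∧f₁ + f₂∧f₃ + f₄∧f₅` of the frame `f`, whose complex coordinates are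
`f₀ + i f₁`, `f₂ + i f₃` and `f₄ + i f₅`. -/
noncomputable def kahlerForm (f : Fin 6 → M) : ExteriorAlgebra F M :=
  ι F (f 0) * ι F (f 1) + ι F (f 2) * ι F (f 3) + ι F (f 4) * ι F (f 5)

variable (F) in
/-- Half the square of the Kähler form of the frame `f`. -/
noncomputable def halfSqKahlerForm (f : Fin 6 → M) : ExteriorAlgebra F M :=
  ι F (f 0) * ι F (f 1) * ι F (f 2) * ι F (f 3) + ι F (f 0) * ι F (f 1) * ι F (f 4) * ι F (f 5) +
    ι F (f 2) * ι F (f 3) * ι F (f 4) * ι F (f 5)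

variable (F) in
/-- The imaginary part of the complex volume form
`(f₀ + i f₁) ∧ (f₂ + i f₃) ∧ (f₄ + i f₅)` of the frame `f`. -/
noncomputable def imVolumeForm (f : Fin 6 → M) : ExteriorAlgebra F M :=
  -(ι F (f 1) * ι F (f 3) * ι F (f 5)) + ι F (f 1) * ι F (f 2) * ι F (f 4) +
    ι F (f 0) * ι F (f 3) * ι F (f 4) + ι F (f 0) * ι F (f 2) * ι F (f 5)

theorem kahlerForm_mul_self (f : Fin 6 → M) :
    kahlerForm F f * kahlerForm F f = (2 : F) • halfSqKahlerForm F f := by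
  rw [kahlerForm, mul_add, add_mul _ _ (_ + _), sq_ι_mul_ι_add_ι_mul_ι, add_mul _ _ (ι F (f 4) * _),
    ι_mul_ι_mul_self, mul_add, add_mul, (commute_ι_mul_ι (f 4) (f 5) (f 0) (f 1)).eq,
    (commute_ι_mul_ι (f 4) (f 5) (f 2) (f 3)).eq, halfSqKahlerForm]
  simp only [← mul_assoc]
  module

theorem halfSqKahlerForm_mul_kahlerForm (f : Fin 6 → M) :
    halfSqKahlerForm F f * kahlerForm F f = (3 : F) • ExteriorAlgebra.ιMulti F 6 f := by
  have hzero (X : ExteriorAlgebra F M) (a b : M) : X * (ι F a * ι F b) * (ι F a * ι F b) = 0 := by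
    rw [mul_assoc, ι_mul_ι_mul_self, mul_zero]
  have hcomm (X : ExteriorAlgebra F M) (a b c d : M) :
      X * (ι F a * ι F b) * (ι F c * ι F d) = X * (ι F c * ι F d) * (ι F a * ι F b) := by
    rw [mul_assoc X, (commute_ι_mul_ι a b c d).eq, mul_assoc X]
  have hhalf : halfSqKahlerForm F f =
      1 * (ι F (f 0) * ι F (f 1)) * (ι F (f 2) * ι F (f 3)) +
        1 * (ι F (f 0) * ι F (f 1)) * (ι F (f 4) * ι F (f 5)) +
        1 * (ι F (f 2) * ι F (f 3)) * (ι F (f 4) * ι F (f 5)) := by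
    simp only [halfSqKahlerForm, one_mul, mul_assoc]
  rw [hhalf, kahlerForm, ιMulti_six]
  simp only [mul_add, add_mul, hzero, hcomm _ (f 2) (f 3) (f 0) (f 1),
    hcomm _ (f 4) (f 5) (f 0) (f 1), hcomm _ (f 4) (f 5) (f 2) (f 3), zero_mul]
  simp only [one_mul, ← mul_assoc]
  module

theorem memPow_kahlerForm (f : Fin 6 → M) :
    memPow (Submodule.span F (Set.range f)) 2 (kahlerForm F f) := by
  have hmem (i : Fin 6) : f i ∈ Submodule.span F (Set.range f) := Submodule.subset_span ⟨i, rfl⟩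
  exact ((((dec_ι (hmem 0)).mul_ι (hmem 1)).lenLE_one.add_dec
    ((dec_ι (hmem 2)).mul_ι (hmem 3))).add_dec ((dec_ι (hmem 4)).mul_ι (hmem 5))).memPow

theorem eq_zero_of_contract_kahlerForm_eq_zero {f : Fin 6 → M} (hf : LinearIndependent F f)
    {d : Dual F M} (hd : contract d (kahlerForm F f) = 0) (i : Fin 6) : d (f i) = 0 := by
  have hι : ι F (∑ j, ![d (f 1), -d (f 0), d (f 3), -d (f 2), d (f 5), -d (f 4)] j • f j) = 0 := by
    rw [← hd]
    simp only [kahlerForm, Fin.sum_univ_six, map_add, map_smul, contract_mul_ι, contract_ι,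
      ← Algebra.smul_def, Matrix.cons_val]
    module
  have h := Fintype.linearIndependent_iff.1 hf _ ((ExteriorAlgebra.ι_eq_zero_iff _).1 hι)
  fin_cases i
  exacts [neg_eq_zero.1 (h 1), h 0, neg_eq_zero.1 (h 3), h 2, neg_eq_zero.1 (h 5), h 4]

theorem kahlerForm_cube_ne_zero [CharZero F] {f : Fin 6 → M} (hf : LinearIndependent F f) :
    kahlerForm F f * kahlerForm F f * kahlerForm F f ≠ 0 := by
  rw [kahlerForm_mul_self, smul_mul_assoc, halfSqKahlerForm_mul_kahlerForm]
  exact smul_ne_zero two_ne_zero (smul_ne_zero three_ne_zero (ιMulti_ne_zero hf))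

theorem hasIndecContractions_halfSqKahlerForm [CharZero F] {f : Fin 6 → M}
    (hf : LinearIndependent F f) :
    HasIndecContractions (Submodule.span F (Set.range f)) 3 (halfSqKahlerForm F f) := by
  refine hasIndecContractions_of_mul_self (memPow_kahlerForm f) (kahlerForm_cube_ne_zero hf)
    (fun d hd => ?_) (kahlerForm_mul_self f)
  have hspan : Submodule.span F (Set.range f) ≤ LinearMap.ker d := Submodule.span_le.2 <|
    Set.range_subset_iff.2 (eq_zero_of_contract_kahlerForm_eq_zero hf hd)
  exact fun w hw => hspan hw

theorem imVolumeForm_eq_mul_ι_add_mul_ι (f : Fin 6 → M) :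
    imVolumeForm F f = (ι F (f 3) * ι F (f 4) + ι F (f 2) * ι F (f 5)) * ι F (f 0) +
      (ι F (f 2) * ι F (f 4) + ι F (f 5) * ι F (f 3)) * ι F (f 1) := by
  simp only [imVolumeForm, add_mul, ι_mul_ι_mul_ι_rotate _ _ (f 0), ι_mul_ι_mul_ι_rotate _ _ (f 1),
    mul_ι_mul_ι_swap _ (f 5) (f 3)]
  abel

theorem imVolumeForm_add_two (f : Fin 6 → M) :
    imVolumeForm F (fun i => f (i + 2)) = imVolumeForm F f := by
  change -(ι F (f 3) * ι F (f 5) * ι F (f 1)) + ι F (f 3) * ι F (f 4) * ι F (f 0) +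
    ι F (f 2) * ι F (f 5) * ι F (f 0) + ι F (f 2) * ι F (f 4) * ι F (f 1) = imVolumeForm F f
  simp only [imVolumeForm, ι_mul_ι_mul_ι_rotate _ _ (f 0), ι_mul_ι_mul_ι_rotate _ _ (f 1)]
  abel

theorem memPow_imVolumeForm (f : Fin 6 → M) :
    memPow (Submodule.span F (Set.range f)) 3 (imVolumeForm F f) := by
  have hmem (i : Fin 6) : f i ∈ Submodule.span F (Set.range f) := Submodule.subset_span ⟨i, rfl⟩
  have hι (i j : Fin 6) : memPow (Submodule.span F (Set.range f)) 2 (ι F (f i) * ι F (f j)) :=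
    ((dec_ι (hmem i)).mul_ι (hmem j)).memPow
  rw [imVolumeForm_eq_mul_ι_add_mul_ι]
  exact Submodule.add_mem _ (memPow.mul_ι (Submodule.add_mem _ (hι 3 4) (hι 2 5)) (hmem 0))
    (memPow.mul_ι (Submodule.add_mem _ (hι 2 4) (hι 5 3)) (hmem 1))

theorem sq_smul_add_smul_ι_mul_ι (a b c d : M) (s t : F) :
    (s • (ι F b * ι F c + ι F a * ι F d) + t • (ι F a * ι F c + ι F d * ι F b)) ^ 2 =
      (2 * (s ^ 2 + t ^ 2)) • (ι F a * ι F b * ι F c * ι F d) := by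
  have hfactor : s • (ι F b * ι F c + ι F a * ι F d) + t • (ι F a * ι F c + ι F d * ι F b) =
      ι F a * ι F (s • d + t • c) + ι F b * ι F (s • c - t • d) := by
    simp only [map_add, map_sub, map_smul, mul_add, mul_sub, mul_smul_comm, ι_mul_ι_swap d]
    module
  rw [hfactor, sq, sq_ι_mul_ι_add_ι_mul_ι, mul_ι_mul_ι_swap (ι F a)]
  simp only [map_add, map_sub, map_smul, mul_add, mul_sub, add_mul, mul_smul_comm,
    smul_mul_assoc, neg_mul, mul_ι_mul_ι_self, mul_ι_mul_ι_swap _ d c]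
  module

theorem sq_contract_imVolumeForm (f : Fin 6 → M) (d : Dual F M) :
    contract d (imVolumeForm F f) ^ 2 * ι F (f 0) * ι F (f 1) =
      (2 * (d (f 0) ^ 2 + d (f 1) ^ 2)) • ExteriorAlgebra.ιMulti F 6 (fun i => f (i + 2)) := by
  set A := ι F (f 3) * ι F (f 4) + ι F (f 2) * ι F (f 5) with hA
  set B := ι F (f 2) * ι F (f 4) + ι F (f 5) * ι F (f 3) with hB
  set Y := contract d (imVolumeForm F f) with hY
  set Z := d (f 0) • A + d (f 1) • B with hZ
  have hYZ : Y * (ι F (f 0) * ι F (f 1)) = Z * (ι F (f 0) * ι F (f 1)) := by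
    rw [hY, imVolumeForm_eq_mul_ι_add_mul_ι, map_add, contract_mul_ι, contract_mul_ι, ← hA, ← hB,
      ← mul_assoc, ← mul_assoc]
    simp only [add_mul, sub_mul, neg_mul, mul_ι_mul_ι_self, mul_ι_mul_ι_swap _ (f 1) (f 0),
      neg_zero, sub_zero, hZ]
  have hcomm : Commute Y Z := by
    have hι (a : M) : Commute Y (ι F a) :=
      (((memPow_imVolumeForm f).memPow_contract d).ι_mul_comm_of_two a).symm
    have hιι (a b : M) : Commute Y (ι F a * ι F b) := (hι a).mul_right (hι b)
    exact (((hιι _ _).add_right (hιι _ _)).smul_right _).add_right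
      (((hιι _ _).add_right (hιι _ _)).smul_right _)
  calc
    Y ^ 2 * ι F (f 0) * ι F (f 1) = Y * (Y * (ι F (f 0) * ι F (f 1))) := by
      rw [sq, mul_assoc, mul_assoc]
    _ = Z ^ 2 * (ι F (f 0) * ι F (f 1)) := by
      rw [hYZ, ← mul_assoc, hcomm.eq, mul_assoc, hYZ, ← mul_assoc, sq]
    _ = _ := by
      rw [sq_smul_add_smul_ι_mul_ι, ιMulti_six, smul_mul_assoc, ← mul_assoc]
      rfl

theorem eq_zero_of_dec_contract_imVolumeForm [LinearOrder F] [IsStrictOrderedRing F]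
    {f : Fin 6 → M} (hf : LinearIndependent F f) {d : Dual F M}
    (hd : Dec ⊤ 2 (contract d (imVolumeForm F f))) : d (f 0) = 0 ∧ d (f 1) = 0 := by
  have h := sq_contract_imVolumeForm f d
  rw [sq, hd.mul_self_eq_zero, zero_mul, zero_mul] at h
  have hshift : LinearIndependent F fun i => f (i + 2) := hf.comp _ (add_left_injective 2)
  have hsum := (mul_eq_zero.1
    ((smul_eq_zero.1 h.symm).resolve_right (ιMulti_ne_zero hshift))).resolve_left two_ne_zero
  exact ((add_eq_zero_iff_of_nonneg (sq_nonneg _) (sq_nonneg _)).1 hsum).imp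
    (pow_eq_zero_iff two_ne_zero).1 (pow_eq_zero_iff two_ne_zero).1

theorem hasIndecContractions_imVolumeForm [LinearOrder F] [IsStrictOrderedRing F]
    {f : Fin 6 → M} (hf : LinearIndependent F f) :
    HasIndecContractions (Submodule.span F (Set.range f)) 2 (imVolumeForm F f) := by
  refine ⟨memPow_imVolumeForm f, fun d hd => ?_⟩
  have hf₂ : LinearIndependent F fun i => f (i + 2) := hf.comp _ (add_left_injective 2)
  have hf₄ : LinearIndependent F fun i => f (i + 2 + 2) := hf₂.comp _ (add_left_injective 2)
  have h₀₁ := eq_zero_of_dec_contract_imVolumeForm hf hd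
  have h₂₃ := eq_zero_of_dec_contract_imVolumeForm hf₂ (d := d)
    (by rwa [imVolumeForm_add_two])
  have h₄₅ := eq_zero_of_dec_contract_imVolumeForm hf₄ (d := d)
    (by rwa [imVolumeForm_add_two fun i => f (i + 2), imVolumeForm_add_two])
  have hspan : Submodule.span F (Set.range f) ≤ LinearMap.ker d := by
    rw [Submodule.span_le, Set.range_subset_iff]
    intro i
    fin_cases i
    exacts [h₀₁.1, h₀₁.2, h₂₃.1, h₂₃.2, h₄₅.1, h₄₅.2]
  exact fun w hw => hspan hw

theorem exists_split_halfSqKahlerForm {f : Fin 6 → M} (hf : LinearIndependent F f)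
    (hsupp : supp 4 (halfSqKahlerForm F f) = Submodule.span F (Set.range f)) :
    ∃ v U X₁ X₂, Split 4 (halfSqKahlerForm F f) v U X₁ X₂ ∧
      LenLE (Submodule.span F (Set.range f)) 3 2 X₁ ∧
      LenLE (Submodule.span F (Set.range f)) 4 1 X₂ := by
  have htail (i : Fin 5) : f i.succ ∈ Submodule.span F (Set.range (Fin.tail f)) :=
    Submodule.subset_span ⟨i, rfl⟩
  have hX₁ : LenLE (Submodule.span F (Set.range (Fin.tail f))) 3 2
      (ι F (f 2) * ι F (f 1) * ι F (f 3) + ι F (f 4) * ι F (f 1) * ι F (f 5)) :=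
    (((dec_ι (htail 1)).mul_ι (htail 0)).mul_ι (htail 2)).lenLE_one.add_dec
      (((dec_ι (htail 3)).mul_ι (htail 0)).mul_ι (htail 4))
  have hX₂ : LenLE (Submodule.span F (Set.range (Fin.tail f))) 4 1
      (ι F (f 2) * ι F (f 3) * ι F (f 4) * ι F (f 5)) :=
    ((((dec_ι (htail 1)).mul_ι (htail 2)).mul_ι (htail 3)).mul_ι (htail 4)).lenLE_one
  have hrotate (a b c d : M) :
      ι F a * ι F b * ι F c * ι F d = ι F c * ι F b * ι F d * ι F a := by
    rw [mul_ι_mul_ι_swap (ι F c * ι F b), ι_mul_ι_mul_ι_rotate c b a, mul_ι_mul_ι_swap (ι F a),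
      neg_mul]
  refine ⟨_, _, _, _, split_of_supp_eq_span_range hf hsupp hX₁.memPow hX₂.memPow ?_,
    hX₁.mono (span_range_tail_le f), hX₂.mono (span_range_tail_le f)⟩
  rw [halfSqKahlerForm, hrotate (f 0), hrotate (f 0), add_mul]

theorem Split.right_ne_zero_of_halfSqKahlerForm [CharZero F] {f : Fin 6 → M}
    (hf : LinearIndependent F f) {v : M} {U : Submodule F M} {X₁ X₂ : ExteriorAlgebra F M}
    (hS : Split 4 (halfSqKahlerForm F f) v U X₁ X₂) : X₂ ≠ 0 := by
  rintro rfl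
  obtain ⟨-, hv, -, -, -, -, hX⟩ := hS
  refine hv <| eq_zero_of_mul_self_mul_ι_eq_zero (memPow_kahlerForm f)
    (kahlerForm_cube_ne_zero hf) ?_
  rw [kahlerForm_mul_self, hX, add_zero, smul_mul_assoc, mul_ι_mul_ι_self, smul_zero]

theorem invariants_halfSqKahlerForm [CharZero F] {f : Fin 6 → M} (hf : LinearIndependent F f) :
    rkInv 4 (halfSqKahlerForm F f) = 6 ∧
      len (Submodule.span F (Set.range f)) 4 (halfSqKahlerForm F f) = 3 ∧
      mInv (Submodule.span F (Set.range f)) 4 (halfSqKahlerForm F f) = 2 ∧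
      rInv (Submodule.span F (Set.range f)) 4 (halfSqKahlerForm F f) = 1 := by
  have hX := hasIndecContractions_halfSqKahlerForm hf
  have hrank : finrank F (Submodule.span F (Set.range f)) = 6 := finrank_span_eq_card hf
  have hdec (i j k l : Fin 6) : Dec (Submodule.span F (Set.range f)) 4
      (ι F (f i) * ι F (f j) * ι F (f k) * ι F (f l)) := by
    have hmem (i : Fin 6) : f i ∈ Submodule.span F (Set.range f) := Submodule.subset_span ⟨i, rfl⟩
    exact (((dec_ι (hmem i)).mul_ι (hmem j)).mul_ι (hmem k)).mul_ι (hmem l)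
  obtain ⟨v, U, X₁, X₂, hS, hX₁, hX₂⟩ := exists_split_halfSqKahlerForm hf hX.supp_eq
  refine ⟨by rw [rkInv, hX.supp_eq, hrank], ?_,
    mInv_eq_of_split hS hX₁ fun _ _ _ _ => hX.not_lenLE_one_left,
    rInv_eq_of_split hS hX₂ fun _ _ _ _ hS => mt lenLE_zero_iff.1
      (hS.right_ne_zero_of_halfSqKahlerForm hf)⟩
  exact len_eq_of_lenLE (((hdec 0 1 2 3).lenLE_one.add_dec (hdec 0 1 4 5)).add_dec (hdec 2 3 4 5))
    (hX.not_lenLE_two (by rw [hrank]; norm_num))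

theorem lenLE_three_imVolumeForm [CharZero F] (f : Fin 6 → M) :
    LenLE (Submodule.span F (Set.range f)) 3 3 (imVolumeForm F f) := by
  have hmem (i : Fin 6) : f i ∈ Submodule.span F (Set.range f) := Submodule.subset_span ⟨i, rfl⟩
  have hadd (i j : Fin 6) := Submodule.add_mem _ (hmem i) (hmem j)
  have hsub (i j : Fin 6) := Submodule.sub_mem _ (hmem i) (hmem j)
  -- The first two terms keep the monomials with an even number of minus signs. These are the ones
  -- of `imVolumeForm F f`, up to the sign of the one that the third term corrects.
  have hsum : imVolumeForm F f =
      (2⁻¹ : F) • (ι F (f 0 + f 1) * ι F (f 2 + f 3) * ι F (f 5 + f 4)) +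
        (2⁻¹ : F) • (ι F (f 0 - f 1) * ι F (f 2 - f 3) * ι F (f 5 - f 4)) +
        (-2 : F) • (ι F (f 1) * ι F (f 3) * ι F (f 5)) := by
    simp only [imVolumeForm, map_add, map_sub, add_mul, mul_add, sub_mul, mul_sub]
    module
  rw [hsum]
  exact (((((dec_ι (hadd 0 1)).mul_ι (hadd 2 3)).mul_ι (hadd 5 4)).smul _).lenLE_one.add_dec
    ((((dec_ι (hsub 0 1)).mul_ι (hsub 2 3)).mul_ι (hsub 5 4)).smul _)).add_dec
    ((((dec_ι (hmem 1)).mul_ι (hmem 3)).mul_ι (hmem 5)).smul _)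

theorem exists_split_imVolumeForm {f : Fin 6 → M} (hf : LinearIndependent F f)
    (hsupp : supp 3 (imVolumeForm F f) = Submodule.span F (Set.range f)) :
    ∃ v U X₁ X₂, Split 3 (imVolumeForm F f) v U X₁ X₂ ∧
      LenLE (Submodule.span F (Set.range f)) 2 2 X₁ ∧
      LenLE (Submodule.span F (Set.range f)) 3 2 X₂ := by
  have htail (i : Fin 5) : f i.succ ∈ Submodule.span F (Set.range (Fin.tail f)) :=
    Submodule.subset_span ⟨i, rfl⟩
  have hX₁ : LenLE (Submodule.span F (Set.range (Fin.tail f))) 2 2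
      (ι F (f 3) * ι F (f 4) + ι F (f 2) * ι F (f 5)) :=
    ((dec_ι (htail 2)).mul_ι (htail 3)).lenLE_one.add_dec ((dec_ι (htail 1)).mul_ι (htail 4))
  have hX₂ : LenLE (Submodule.span F (Set.range (Fin.tail f))) 3 2
      ((ι F (f 2) * ι F (f 4) + ι F (f 5) * ι F (f 3)) * ι F (f 1)) := by
    rw [add_mul]
    exact (((dec_ι (htail 1)).mul_ι (htail 3)).mul_ι (htail 0)).lenLE_one.add_dec
      (((dec_ι (htail 4)).mul_ι (htail 2)).mul_ι (htail 0))
  exact ⟨_, _, _, _, split_of_supp_eq_span_range hf hsupp hX₁.memPow hX₂.memPow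
    (imVolumeForm_eq_mul_ι_add_mul_ι f), hX₁.mono (span_range_tail_le f),
    hX₂.mono (span_range_tail_le f)⟩

theorem invariants_imVolumeForm [LinearOrder F] [IsStrictOrderedRing F] {f : Fin 6 → M}
    (hf : LinearIndependent F f) :
    rkInv 3 (imVolumeForm F f) = 6 ∧
      len (Submodule.span F (Set.range f)) 3 (imVolumeForm F f) = 3 ∧
      mInv (Submodule.span F (Set.range f)) 3 (imVolumeForm F f) = 2 ∧
      rInv (Submodule.span F (Set.range f)) 3 (imVolumeForm F f) = 2 := by
  have hX := hasIndecContractions_imVolumeForm hf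
  have hrank : finrank F (Submodule.span F (Set.range f)) = 6 := finrank_span_eq_card hf
  obtain ⟨v, U, X₁, X₂, hS, hX₁, hX₂⟩ := exists_split_imVolumeForm hf hX.supp_eq
  exact ⟨by rw [rkInv, hX.supp_eq, hrank],
    len_eq_of_lenLE (lenLE_three_imVolumeForm f) (hX.not_lenLE_two (by rw [hrank]; norm_num)),
    mInv_eq_of_split hS hX₁ fun _ _ _ _ => hX.not_lenLE_one_left,
    rInv_eq_of_split hS hX₂ fun _ _ _ _ =>
      hX.not_lenLE_one_right (by rw [hrank]; norm_num)⟩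

end SixDimensional

section G2Frames

variable {F : Type*} [Field F] {M : Type*} [AddCommGroup M] [Module F M]

/-- The vector dual to the linear form `u` in the metric for which the frame `e` is orthonormal. -/
noncomputable def sharp (e : Fin 7 → M) (u : Dual F M) : M :=
  ∑ i, u (e i) • e i

variable (F) in
/-- The frames `e` and `e'` define the same four-form and the same metric. -/
structure G2Equiv (e e' : Fin 7 → M) : Prop where
  psiPlus_eq : PsiPlus (F := F) e' = PsiPlus e
  sharp_eq : ∀ u : Dual F M, sharp e' u = sharp e u

theorem G2Equiv.trans {e e' e'' : Fin 7 → M} (h : G2Equiv F e e') (h' : G2Equiv F e' e'') :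
    G2Equiv F e e'' :=
  ⟨h'.psiPlus_eq.trans h.psiPlus_eq, fun u => (h'.sharp_eq u).trans (h.sharp_eq u)⟩

theorem exists_sharp_eq (e : Basis (Fin 7) F M) (a : M) : ∃ u : Dual F M, sharp e u = a :=
  ⟨e.constr F (e.repr a), by simp only [sharp, e.constr_basis, e.sum_repr]⟩

theorem G2Equiv.span_range_eq_top {e : Basis (Fin 7) F M} {e' : Fin 7 → M} (h : G2Equiv F e e') :
    Submodule.span F (Set.range e') = ⊤ := by
  refine eq_top_iff.2 fun a _ => ?_
  obtain ⟨u, rfl⟩ := exists_sharp_eq e a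
  rw [← h.sharp_eq]
  exact Submodule.sum_smul_mem _ _ fun i _ => Submodule.subset_span ⟨i, rfl⟩

theorem psiPlus_eq_halfSqKahlerForm_add (e : Fin 7 → M) :
    PsiPlus e = halfSqKahlerForm F (Fin.init e) + imVolumeForm F (Fin.init e) * ι F (e 6) := by
  change _ = ι F (e 0) * ι F (e 1) * ι F (e 2) * ι F (e 3) +
    ι F (e 0) * ι F (e 1) * ι F (e 4) * ι F (e 5) + ι F (e 2) * ι F (e 3) * ι F (e 4) * ι F (e 5) +
    (-(ι F (e 1) * ι F (e 3) * ι F (e 5)) + ι F (e 1) * ι F (e 2) * ι F (e 4) +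
      ι F (e 0) * ι F (e 3) * ι F (e 4) + ι F (e 0) * ι F (e 2) * ι F (e 5)) * ι F (e 6)
  simp only [PsiPlus, wedge4, add_mul, neg_mul]
  abel

theorem halfSqKahlerForm_add_two (f : Fin 6 → M) :
    halfSqKahlerForm F (fun i => f (i + 2)) = halfSqKahlerForm F f := by
  change ι F (f 2) * ι F (f 3) * ι F (f 4) * ι F (f 5) +
    ι F (f 2) * ι F (f 3) * ι F (f 0) * ι F (f 1) +
    ι F (f 4) * ι F (f 5) * ι F (f 0) * ι F (f 1) = halfSqKahlerForm F f
  simp only [mul_assoc _ (ι F (f 0)), (commute_ι_mul_ι _ _ (f 0) (f 1)).eq, halfSqKahlerForm]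
  simp only [← mul_assoc]
  abel

theorem g2Equiv_shift (e : Fin 7 → M) : G2Equiv F e ![e 2, e 3, e 4, e 5, e 0, e 1, e 6] := by
  have hinit : Fin.init ![e 2, e 3, e 4, e 5, e 0, e 1, e 6] = fun i => Fin.init e (i + 2) := by
    ext i
    fin_cases i <;> rfl
  constructor
  · rw [psiPlus_eq_halfSqKahlerForm_add, psiPlus_eq_halfSqKahlerForm_add, hinit,
      halfSqKahlerForm_add_two, imVolumeForm_add_two]
    rfl
  · intro u
    simp only [sharp, Fin.sum_univ_seven, Matrix.cons_val]
    abel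

variable (F) in
/-- The basis of the self-dual bivectors of a four-dimensional frame. -/
noncomputable def selfDual (v : Fin 4 → M) : Fin 3 → ExteriorAlgebra F M :=
  ![ι F (v 0) * ι F (v 1) + ι F (v 2) * ι F (v 3), ι F (v 0) * ι F (v 2) - ι F (v 1) * ι F (v 3),
    ι F (v 0) * ι F (v 3) + ι F (v 1) * ι F (v 2)]

/-- The action of the quaternion `x₀ + x₁ i + x₂ j + x₃ k` on a four-dimensional frame, on the side
that rescales the self-dual bivectors. -/
def quatAct (x : Fin 4 → F) (v : Fin 4 → M) : Fin 4 → M :=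
  ![x 0 • v 0 + x 1 • v 1 + x 2 • v 2 + x 3 • v 3, -x 1 • v 0 + x 0 • v 1 - x 3 • v 2 + x 2 • v 3,
    -x 2 • v 0 + x 3 • v 1 + x 0 • v 2 - x 1 • v 3, -x 3 • v 0 - x 2 • v 1 + x 1 • v 2 + x 0 • v 3]

theorem selfDual_quatAct (x : Fin 4 → F) (v : Fin 4 → M) :
    selfDual F (quatAct x v) = (∑ i, x i ^ 2) • selfDual F v := by
  ext j
  fin_cases j <;>
  · simp only [selfDual, quatAct, Fin.sum_univ_four, Pi.smul_apply, Matrix.cons_val, map_add,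
      map_sub, map_smul, mul_add, add_mul, mul_sub, sub_mul, smul_mul_assoc, mul_smul_comm,
      ExteriorAlgebra.ι_sq_zero, ι_mul_ι_swap (v 1) (v 0), ι_mul_ι_swap (v 2) (v 0),
      ι_mul_ι_swap (v 3) (v 0), ι_mul_ι_swap (v 2) (v 1), ι_mul_ι_swap (v 3) (v 1),
      ι_mul_ι_swap (v 3) (v 2), Fin.zero_eta, Fin.mk_one, Fin.reduceFinMk]
    module

theorem sum_smul_quatAct (x : Fin 4 → F) (v : Fin 4 → M) (u : Dual F M) :
    ∑ i, u (quatAct x v i) • quatAct x v i = (∑ i, x i ^ 2) • ∑ i, u (v i) • v i := by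
  simp only [quatAct, Fin.sum_univ_four, Matrix.cons_val, map_add, map_sub, map_smul, smul_eq_mul]
  module

theorem quatAct_dual_eq_zero (u : Dual F M) (c : F) (v : Fin 4 → M) :
    u (quatAct (fun i => c * u (v i)) v 1) = 0 ∧ u (quatAct (fun i => c * u (v i)) v 2) = 0 ∧
      u (quatAct (fun i => c * u (v i)) v 3) = 0 := by
  simp only [quatAct, Matrix.cons_val, map_add, map_sub, map_smul, smul_eq_mul]
  refine ⟨?_, ?_, ?_⟩ <;> ring

-- `e 1, e 2, e 5` span an associative subspace, with coassociative complement `e 6, e 4, e 3, e 0`.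
theorem psiPlus_eq_selfDual [NeZero (2 : F)] (e : Fin 7 → M) :
    PsiPlus e = (2⁻¹ : F) • selfDual F ![e 6, e 4, e 3, e 0] 0 ^ 2 +
      selfDual F ![e 6, e 4, e 3, e 0] 0 * ι F (e 2) * ι F (e 1) -
      selfDual F ![e 6, e 4, e 3, e 0] 1 * ι F (e 1) * ι F (e 5) -
      selfDual F ![e 6, e 4, e 3, e 0] 2 * ι F (e 2) * ι F (e 5) := by
  have hsq : (2⁻¹ : F) • selfDual F ![e 6, e 4, e 3, e 0] 0 ^ 2 =
      ι F (e 6) * ι F (e 4) * ι F (e 3) * ι F (e 0) := by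
    rw [sq, inv_smul_eq_iff₀ two_ne_zero]
    exact sq_ι_mul_ι_add_ι_mul_ι _ _ _ _
  have hsort (i j : Fin 7) (_ : i < j) : ι F (e j) * ι F (e i) = -(ι F (e i) * ι F (e j)) :=
    ι_mul_ι_swap _ _
  have hsort_right (X : ExteriorAlgebra F M) (i j : Fin 7) (_ : i < j) :
      X * ι F (e j) * ι F (e i) = -(X * ι F (e i) * ι F (e j)) :=
    mul_ι_mul_ι_swap _ _ _
  rw [hsq]
  simp only [PsiPlus, wedge4, selfDual, Matrix.cons_val, add_mul, sub_mul, neg_mul, neg_neg,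
    hsort, hsort_right, Fin.reduceLT]
  abel

theorem g2Equiv_quatAct [NeZero (2 : F)] {x : Fin 4 → F} (hx : ∑ i, x i ^ 2 = 1) (e : Fin 7 → M) :
    G2Equiv F e ![quatAct x ![e 6, e 4, e 3, e 0] 3, e 1, e 2, quatAct x ![e 6, e 4, e 3, e 0] 2,
      quatAct x ![e 6, e 4, e 3, e 0] 1, e 5, quatAct x ![e 6, e 4, e 3, e 0] 0] := by
  set v := ![e 6, e 4, e 3, e 0] with hv
  constructor
  · have hw : ![quatAct x v 0, quatAct x v 1, quatAct x v 2, quatAct x v 3] = quatAct x v := by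
      ext i
      fin_cases i <;> rfl
    simp only [psiPlus_eq_selfDual, Matrix.cons_val, hw, selfDual_quatAct, hx, one_smul, ← hv]
  · intro u
    have h := sum_smul_quatAct x v u
    simp only [hx, one_smul, Fin.sum_univ_four, hv, Matrix.cons_val] at h
    simp only [sharp, Fin.sum_univ_seven, Matrix.cons_val]
    rw [← sub_eq_zero] at h ⊢
    rw [← h]
    abel

theorem exists_g2Equiv_dual_eq_zero_three [LinearOrder F] [IsStrictOrderedRing F]
    (hF : ∀ x : F, 0 ≤ x → IsSquare x) (e : Fin 7 → M) (u : Dual F M) :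
    ∃ e', G2Equiv F e e' ∧ u (e' 0) = 0 ∧ u (e' 3) = 0 ∧ u (e' 4) = 0 ∧
      e' 1 = e 1 ∧ e' 2 = e 2 ∧ e' 5 = e 5 := by
  set v := ![e 6, e 4, e 3, e 0]
  obtain ⟨s, hs⟩ := hF (∑ i, u (v i) ^ 2) (Finset.sum_nonneg fun _ _ => sq_nonneg _)
  by_cases hs0 : s = 0
  · have huv (i : Fin 4) : u (v i) = 0 := by
      rw [hs0, mul_zero, Finset.sum_eq_zero_iff_of_nonneg fun _ _ => sq_nonneg _] at hs
      exact (pow_eq_zero_iff two_ne_zero).1 (hs i (Finset.mem_univ i))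
    exact ⟨e, ⟨rfl, fun _ => rfl⟩, huv 3, huv 2, huv 1, rfl, rfl, rfl⟩
  · have hx : ∑ i, (s⁻¹ * u (v i)) ^ 2 = 1 := by
      simp only [mul_pow, ← Finset.mul_sum, hs]
      field_simp
    obtain ⟨h₁, h₂, h₃⟩ := quatAct_dual_eq_zero u s⁻¹ v
    exact ⟨_, g2Equiv_quatAct hx e, h₃, h₂, h₁, rfl, rfl, rfl⟩

theorem exists_g2Equiv_dual_eq_zero [LinearOrder F] [IsStrictOrderedRing F]
    (hF : ∀ x : F, 0 ≤ x → IsSquare x) (e : Fin 7 → M) (u : Dual F M) :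
    ∃ e', G2Equiv F e e' ∧ ∀ i, u (Fin.init e' i) = 0 := by
  obtain ⟨e₁, he₁, -, ha₃, -⟩ := exists_g2Equiv_dual_eq_zero_three hF e u
  obtain ⟨e₂, he₂, -, hb₃, hb₄, hb₁, -⟩ := exists_g2Equiv_dual_eq_zero_three hF
    ![e₁ 2, e₁ 3, e₁ 4, e₁ 5, e₁ 0, e₁ 1, e₁ 6] u
  obtain ⟨e₃, he₃, hc₀, hc₃, hc₄, hc₁, hc₂, hc₅⟩ := exists_g2Equiv_dual_eq_zero_three hF
    ![e₂ 2, e₂ 3, e₂ 4, e₂ 5, e₂ 0, e₂ 1, e₂ 6] u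
  refine ⟨e₃, he₁.trans <| (g2Equiv_shift e₁).trans <| he₂.trans <| (g2Equiv_shift e₂).trans he₃,
    fun i => ?_⟩
  have hc₁' : u (e₃ 1) = 0 := (congrArg u hc₁).trans hb₃
  have hc₂' : u (e₃ 2) = 0 := (congrArg u hc₂).trans hb₄
  have hb₁' : u (e₂ 1) = 0 := (congrArg u hb₁).trans ha₃
  have hc₅' : u (e₃ 5) = 0 := (congrArg u hc₅).trans hb₁'
  fin_cases i
  exacts [hc₀, hc₁', hc₂', hc₃, hc₄, hc₅']

end G2Frames

section NormalForms

variable {F : Type*} [Field F] {M : Type*} [AddCommGroup M] [Module F M]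
  {W : Submodule F M} {α : M} {Ω P : ExteriorAlgebra F M}

theorem map_halfSqKahlerForm (p : M →ₗ[F] M) (f : Fin 6 → M) :
    ExteriorAlgebra.map p (halfSqKahlerForm F f) = halfSqKahlerForm F (p ∘ f) := by
  simp only [halfSqKahlerForm, map_add, map_mul, ExteriorAlgebra.map_apply_ι, Function.comp_apply]

theorem exists_smul_imVolumeForm {f : Fin 6 → M} (hf : LinearIndependent F f) {c : F} (hc : c ≠ 0) :
    ∃ f' : Fin 6 → M, LinearIndependent F f' ∧
      Submodule.span F (Set.range f') ≤ Submodule.span F (Set.range f) ∧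
      imVolumeForm F f' = c • imVolumeForm F f := by
  set w : Fin 6 → Fˣ := ![Units.mk0 c hc, Units.mk0 c hc, 1, 1, 1, 1] with hw
  refine ⟨w • f, hf.units_smul w, ?_, ?_⟩
  · rw [Submodule.span_le, Set.range_subset_iff]
    exact fun i => Submodule.smul_mem _ _ (Submodule.subset_span ⟨i, rfl⟩)
  · simp only [imVolumeForm, Pi.smul_apply', hw, Matrix.cons_val, Units.smul_def, Units.val_mk0,
      one_smul, map_smul, smul_mul_assoc]
    module

theorem finrank_of_isCompl_span_singleton (e : Basis (Fin 7) F M) (hα : α ≠ 0)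
    (hW : IsCompl (Submodule.span F {α}) W) : finrank F W = 6 := by
  have := Module.Finite.of_basis e
  have h := Submodule.finrank_add_eq_of_isCompl hW
  rw [finrank_span_singleton hα, finrank_eq_card_basis e, Fintype.card_fin] at h
  omega

theorem exists_dual_ker_eq_of_isCompl (hα : α ≠ 0) (hW : IsCompl (Submodule.span F {α}) W) :
    ∃ d : Dual F M, d α ≠ 0 ∧ LinearMap.ker d = W := by
  obtain ⟨d, hdα, hd⟩ := Submodule.exists_le_ker_of_notMem
    ((Submodule.disjoint_span_singleton' hα).1 hW.disjoint.symm)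
  refine ⟨d, hdα, (eq_of_le_of_inf_le_of_sup_le (z := Submodule.span F {α}) hd ?_ ?_).symm⟩
  · exact ((Submodule.disjoint_span_singleton' hα).2 hdα).le_bot.trans bot_le
  · exact le_top.trans hW.symm.sup_eq_top.ge

theorem G2Equiv.linearIndependent_init {e : Basis (Fin 7) F M} {e' : Fin 7 → M}
    (h : G2Equiv F e e') : LinearIndependent F (Fin.init e') :=
  (linearIndependent_of_top_le_span_of_card_eq_finrank h.span_range_eq_top.ge
    (finrank_eq_card_basis e).symm).comp _ (Fin.castSucc_injective 6)

variable [LinearOrder F] [IsStrictOrderedRing F]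

theorem exists_eq_halfSqKahlerForm (hF : ∀ x : F, 0 ≤ x → IsSquare x) (e : Basis (Fin 7) F M)
    (hα : α ≠ 0) (hW : IsCompl (Submodule.span F {α}) W) (hΩ : memPow W 4 Ω)
    (hdec : PsiPlus e = Ω + P * ι F α) :
    ∃ f : Fin 6 → M, LinearIndependent F f ∧ Submodule.span F (Set.range f) = W ∧
      Ω = halfSqKahlerForm F f := by
  obtain ⟨u, hu⟩ := exists_sharp_eq e α
  obtain ⟨e', he', hue'⟩ := exists_g2Equiv_dual_eq_zero hF e u
  have hαe' : α = u (e' 6) • e' 6 := by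
    rw [← hu, ← he'.sharp_eq, sharp, Fin.sum_univ_castSucc, Finset.sum_eq_zero fun i _ => ?_,
      zero_add]
    · rfl
    · rw [show u (e' i.castSucc) = 0 from hue' i, zero_smul]
  set p := W.projection (Submodule.span F {α}) hW.symm with hp
  have hpα : p α = 0 :=
    (Submodule.projection_apply_eq_zero_iff _).2 (Submodule.mem_span_singleton_self α)
  have hpe : p (e' 6) = 0 := by
    rw [hαe', map_smul, smul_eq_zero] at hpα
    exact hpα.resolve_left fun h => hα (by rw [hαe', h, zero_smul])
  have hspan : Submodule.span F (Set.range (p ∘ Fin.init e')) = W := by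
    rw [← Submodule.range_projection hW.symm, ← hp, ← Submodule.map_top, ← he'.span_range_eq_top,
      Submodule.map_span, ← Set.range_comp]
    refine le_antisymm (Submodule.span_mono (Set.range_comp_subset_range Fin.castSucc (p ∘ e'))) ?_
    rw [Submodule.span_le, Set.range_subset_iff]
    refine Fin.lastCases ?_ fun i => Submodule.subset_span ⟨i, rfl⟩
    rw [Function.comp_apply, show Fin.last 6 = 6 from rfl, hpe]
    exact Submodule.zero_mem _
  refine ⟨p ∘ Fin.init e', ?_, hspan, ?_⟩
  · rw [linearIndependent_iff_card_eq_finrank_span, Set.finrank, hspan,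
      finrank_of_isCompl_span_singleton e hα hW, Fintype.card_fin]
  · have hmap := congrArg (ExteriorAlgebra.map p) hdec
    have hpΩ : ExteriorAlgebra.map p Ω = Ω :=
      hΩ.map_eq_self fun a ha => Submodule.projection_apply_left hW.symm ⟨a, ha⟩
    rw [← he'.psiPlus_eq, psiPlus_eq_halfSqKahlerForm_add] at hmap
    simpa only [map_add, map_mul, ExteriorAlgebra.map_apply_ι, hpα, hpe, map_zero, mul_zero,
      add_zero, map_halfSqKahlerForm, hpΩ] using hmap.symm

theorem exists_eq_imVolumeForm (hF : ∀ x : F, 0 ≤ x → IsSquare x) (e : Basis (Fin 7) F M)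
    (hα : α ≠ 0) (hW : IsCompl (Submodule.span F {α}) W) (hΩ : memPow W 4 Ω) (hP : memPow W 3 P)
    (hdec : PsiPlus e = Ω + P * ι F α) :
    ∃ f : Fin 6 → M, LinearIndependent F f ∧ Submodule.span F (Set.range f) = W ∧
      P = imVolumeForm F f := by
  obtain ⟨d, hdα, rfl⟩ := exists_dual_ker_eq_of_isCompl hα hW
  obtain ⟨e', he', hde'⟩ := exists_g2Equiv_dual_eq_zero hF e d
  have hinit : Submodule.span F (Set.range (Fin.init e')) ≤ LinearMap.ker d :=
    Submodule.span_le.2 (Set.range_subset_iff.2 hde')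
  have hde : d (e' 6) ≠ 0 := fun h => hdα <| by
    have hspan : Submodule.span F (Set.range e') ≤ LinearMap.ker d :=
      Submodule.span_le.2 (Set.range_subset_iff.2 (Fin.lastCases h hde'))
    exact hspan (he'.span_range_eq_top ▸ Submodule.mem_top)
  have hcontract : d (e' 6) • imVolumeForm F (Fin.init e') = d α • P := by
    have h := congrArg (contract d) hdec
    have hX := (hasIndecContractions_halfSqKahlerForm he'.linearIndependent_init).mem
    rwa [← he'.psiPlus_eq, psiPlus_eq_halfSqKahlerForm_add, map_add, map_add, contract_mul_ι,
      contract_mul_ι, hX.contract_eq_zero fun _ ha => hinit ha,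
      (memPow_imVolumeForm _).contract_eq_zero fun _ ha => hinit ha,
      hΩ.contract_eq_zero fun _ ha => ha, hP.contract_eq_zero fun _ ha => ha, zero_mul, zero_mul,
      sub_zero, sub_zero, zero_add, zero_add] at h
  obtain ⟨f, hf, hfspan, hfP⟩ := exists_smul_imVolumeForm he'.linearIndependent_init
    (mul_ne_zero (inv_ne_zero hdα) hde)
  refine ⟨f, hf, ?_, ?_⟩
  · have := Module.Finite.of_basis e
    refine Submodule.eq_of_le_of_finrank_eq (hfspan.trans hinit) ?_
    rw [finrank_span_eq_card hf, finrank_of_isCompl_span_singleton e hα hW, Fintype.card_fin]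
  · rw [hfP, mul_smul, hcontract, inv_smul_smul₀ hdα]

end NormalForms

theorem stmt9_general {F : Type*} [Field F] [LinearOrder F] [IsStrictOrderedRing F]
    (hF : ∀ x : F, 0 ≤ x → IsSquare x) {M : Type*} [AddCommGroup M] [Module F M]
    (e : Basis (Fin 7) F M) {α : M} (hα : α ≠ 0) {W : Submodule F M}
    (hW : IsCompl (Submodule.span F {α}) W) {Ω P : ExteriorAlgebra F M}
    (hΩ : memPow W 4 Ω) (hP : memPow W 3 P) (hdec : PsiPlus e = Ω + P * ι F α) :
    (rkInv 4 Ω = 6 ∧ len W 4 Ω = 3 ∧ mInv W 4 Ω = 2 ∧ rInv W 4 Ω = 1) ∧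
      (rkInv 3 P = 6 ∧ len W 3 P = 3 ∧ mInv W 3 P = 2 ∧ rInv W 3 P = 2) := by
  constructor
  · obtain ⟨f, hf, rfl, rfl⟩ := exists_eq_halfSqKahlerForm hF e hα hW hΩ hdec
    exact invariants_halfSqKahlerForm hf
  · obtain ⟨f, hf, rfl, rfl⟩ := exists_eq_imVolumeForm hF e hα hW hΩ hP hdec
    exact invariants_imVolumeForm hf

/-- Let `V` be a seven-dimensional real vector space and let
`Ψ ∈ Λ⁴V*` be the Hodge dual of a `G₂`-structure, i.e. for some basis `e¹,…,e⁷` of `V*`,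
`Ψ = e^{1234}+e^{1256}+e^{3456}-e^{2467}+e^{2357}+e^{1457}+e^{1367}`.  Let `0 ≠ α ∈ V*`,
`W` a complement of `span α` in `V*`, and `Ω ∈ Λ⁴W`, `ρ ∈ Λ³W` the unique forms with
`Ψ = Ω + ρ ∧ α`.  Then `(ρ(Ω), l(Ω), m(Ω), r(Ω)) = (6,3,2,1)` and
`(ρ(ρ), l(ρ), m(ρ), r(ρ)) = (6,3,2,2)`, the invariants being computed in the exterior
algebra of the six-dimensional space `W`. -/
theorem stmt9 {V : Type*} [AddCommGroup V] [Module ℝ V] [FiniteDimensional ℝ V]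
    (hV : finrank ℝ V = 7)
    (Ψ : ExteriorAlgebra ℝ (Module.Dual ℝ V))
    (hΨ : ∃ e : Basis (Fin 7) ℝ (Module.Dual ℝ V), Ψ = PsiPlus (F := ℝ) (⇑e))
    (α : Module.Dual ℝ V) (hα : α ≠ 0)
    (W : Submodule ℝ (Module.Dual ℝ V)) (hW : IsCompl (Submodule.span ℝ {α}) W)
    (Ω P : ExteriorAlgebra ℝ (Module.Dual ℝ V))
    (hΩ : memPow W 4 Ω) (hP : memPow W 3 P)
    (hdec : Ψ = Ω + P * ExteriorAlgebra.ι ℝ α) :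
    (rkInv (F := ℝ) 4 Ω = 6 ∧ len W 4 Ω = 3 ∧ mInv W 4 Ω = 2 ∧ rInv W 4 Ω = 1) ∧
      (rkInv (F := ℝ) 3 P = 6 ∧ len W 3 P = 3 ∧ mInv W 3 P = 2 ∧ rInv W 3 P = 2) := by
  obtain ⟨e, rfl⟩ := hΨ
  exact stmt9_general (fun _ => Real.isSquare_iff.2) e hα hW hΩ hP hdec
end

section
/- Let V be a six-dimensional vector space over F ∈ {ℝ,ℂ}, let ω ∈ Λ²V* satisfy ω∧ω∧ω ≠ 0 (i.e. ω is nondegenerate), and set Ω := (1/2)·ω∧ω ∈ Λ⁴V*. Then: (i) {f ∈ GL(V) : f*Ω = Ω} = {f ∈ GL(V) : f*ω = ω or f*ω = −ω}, i.e. the stabilizer of Ω under the natural action of GL(V) on Λ⁴V* consists exactly of the symplectic and the anti-symplectic transformations of (V,ω); (ii) {f ∈ End(V) : Σ_{i=1}^4 Ω(v₁,…,f(v_i),…,v₄) = 0 for all v₁,…,v₄ ∈ V} = sp(V,ω). -/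
open Module

/-- The four-form `Ω := (1/2) ω ∧ ω`, evaluated on `(a,b,c,d)`:
`Ω(a,b,c,d) = ω(a,b)ω(c,d) - ω(a,c)ω(b,d) + ω(a,d)ω(b,c)`. -/
def halfSq {F : Type*} [Field F] {V : Type*} [AddCommGroup V] [Module F V]
    (ω : V →ₗ[F] V →ₗ[F] F) (a b c d : V) : F :=
  ω a b * ω c d - ω a c * ω b d + ω a d * ω b c

/-!
A bilinear form of rank greater than four remains nonzero on every subspace of codimension at most
two. So for all `v`, `φ` there are `a`, `b` annihilated by `ω v` and `φ` with `ω a b ≠ 0`, and on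
`(v, c, a, b)` the four-form `Ω` reduces to the single product `ω v c * ω a b`; `ω ∧ η` simplifies
in the same way. Comparing such values, `f*Ω = Ω` forces `ω` to vanish wherever `f*ω` does, and
`ω ∧ η = 0` forces `η` to vanish wherever `ω` does. Two bilinear forms with nested zero sets are
proportional, and evaluating `Ω` determines the factor: `±1` in the first case and `0` in the
second, where `η` is the infinitesimal action of `f` on `ω`.
-/

section Rank

variable {F V : Type*} [Field F] [AddCommGroup V] [Module F V]

theorem rank_eq_finrank_of_separatingLeft [FiniteDimensional F V] {B : V →ₗ[F] V →ₗ[F] F}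
    (hB : B.SeparatingLeft) : B.rank = finrank F V := by
  have hinj : Function.Injective B :=
    LinearMap.ker_eq_bot.1 (LinearMap.separatingLeft_iff_ker_eq_bot.1 hB)
  rw [LinearMap.rank, ← finrank_eq_rank, LinearMap.finrank_range_of_inj hinj]

theorem rank_le_two_mul_finrank_quotient {B : V →ₗ[F] V →ₗ[F] F} (W : Submodule F V)
    [FiniteDimensional F (V ⧸ W)] (hW : ∀ a ∈ W, ∀ b ∈ W, B a b = 0) :
    B.rank ≤ (2 * finrank F (V ⧸ W) : ℕ) := by
  obtain ⟨C, hWC⟩ := W.exists_isCompl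
  let quotientEquiv : (V ⧸ W) ≃ₗ[F] C := W.quotientEquivOfIsCompl C hWC
  have : FiniteDimensional F C := quotientEquiv.finiteDimensional
  have : FiniteDimensional F W.dualAnnihilator := W.dualQuotEquivDualAnnihilator.finiteDimensional
  have range_le : B.range ≤ W.dualAnnihilator ⊔ C.map B := by
    rw [LinearMap.range_eq_map, ← hWC.sup_eq_top, Submodule.map_sup]
    gcongr
    rintro _ ⟨a, ha, rfl⟩
    exact (Submodule.mem_dualAnnihilator _).2 (hW a ha)
  have finrank_annihilator : finrank F W.dualAnnihilator = finrank F (V ⧸ W) := by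
    rw [← W.dualQuotEquivDualAnnihilator.finrank_eq, Subspace.dual_finrank_eq]
  have finrank_map : finrank F (C.map B) ≤ finrank F (V ⧸ W) :=
    (Submodule.finrank_map_le B C).trans_eq quotientEquiv.finrank_eq.symm
  have finrank_sup : finrank F ↥(W.dualAnnihilator ⊔ C.map B) ≤ 2 * finrank F (V ⧸ W) :=
    calc finrank F ↥(W.dualAnnihilator ⊔ C.map B)
        ≤ finrank F W.dualAnnihilator + finrank F (C.map B) :=
          Submodule.finrank_add_le_finrank_add_finrank _ _
      _ ≤ finrank F (V ⧸ W) + finrank F (V ⧸ W) := add_le_add finrank_annihilator.le finrank_map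
      _ = 2 * finrank F (V ⧸ W) := (two_mul _).symm
  calc B.rank ≤ Module.rank F ↥(W.dualAnnihilator ⊔ C.map B) := Submodule.rank_mono range_le
    _ = finrank F ↥(W.dualAnnihilator ⊔ C.map B) := (finrank_eq_rank F _).symm
    _ ≤ (2 * finrank F (V ⧸ W) : ℕ) := Nat.cast_le.2 finrank_sup

theorem exists_apply_ne_zero_of_four_lt_rank {B : V →ₗ[F] V →ₗ[F] F} (hB : 4 < B.rank)
    (φ ψ : Dual F V) :
    ∃ a b, (φ a = 0 ∧ ψ a = 0) ∧ (φ b = 0 ∧ ψ b = 0) ∧ B a b ≠ 0 := by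
  by_contra! hzero
  let K := (φ.prod ψ).ker
  have mem_K {v : V} : v ∈ K ↔ φ v = 0 ∧ ψ v = 0 := by simp [K]
  let quotientEquiv : (V ⧸ K) ≃ₗ[F] (φ.prod ψ).range := (φ.prod ψ).quotKerEquivRange
  have : FiniteDimensional F (V ⧸ K) := quotientEquiv.symm.finiteDimensional
  have codim_le : finrank F (V ⧸ K) ≤ 2 := by
    rw [quotientEquiv.finrank_eq]
    exact (Submodule.finrank_le _).trans (by simp)
  have rank_le : B.rank ≤ (2 * finrank F (V ⧸ K) : ℕ) :=
    rank_le_two_mul_finrank_quotient K fun a ha b hb ↦ hzero a b (mem_K.1 ha) (mem_K.1 hb)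
  have : 4 < 2 * finrank F (V ⧸ K) := by exact_mod_cast hB.trans_le rank_le
  omega

end Rank

section Proportionality

variable {F V W : Type*} [Field F] [AddCommGroup V] [Module F V] [AddCommGroup W] [Module F W]

theorem apply_mul_apply_eq_of_ker_le_ker {φ ψ : Dual F V} (h : φ.ker ≤ ψ.ker) (v w : V) :
    ψ v * φ w = φ v * ψ w := by
  have hmem : φ w • v - φ v • w ∈ φ.ker := by simp [mul_comm]
  have : φ w * ψ v - φ v * ψ w = 0 := by simpa using h hmem
  linear_combination this

theorem apply_mul_apply_eq_of_apply_eq_zero_imp {B C : V →ₗ[F] W →ₗ[F] F}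
    (h : ∀ v w, B v w = 0 → C v w = 0) (a x : V) (b y : W) :
    C a b * B x y = B a b * C x y := by
  have same_left (v : V) (w w' : W) : C v w * B v w' = B v w * C v w' :=
    apply_mul_apply_eq_of_ker_le_ker (h v) w w'
  have same_right (v v' : V) (w : W) : C v w * B v' w = B v w * C v' w :=
    apply_mul_apply_eq_of_ker_le_ker (φ := B.flip w) (ψ := C.flip w) (fun v ↦ h v w) v v'
  by_cases hay : B a y = 0
  · by_cases hxb : B x b = 0
    · simpa [hay, hxb, h a y hay, h x b hxb] using same_left (a + x) b y
    · apply mul_left_cancel₀ hxb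
      linear_combination B x y * same_right a x b + B a b * same_left x b y
  · apply mul_left_cancel₀ hay
    linear_combination B x y * same_left a b y + B a b * same_right a x y

theorem exists_eq_smul_of_apply_eq_zero_imp {B C : V →ₗ[F] W →ₗ[F] F}
    (h : ∀ v w, B v w = 0 → C v w = 0) : ∃ r : F, C = r • B := by
  by_cases hB : ∀ x y, B x y = 0
  · exact ⟨0, LinearMap.ext₂ fun v w ↦ by simp [h v w (hB v w)]⟩
  · push Not at hB
    obtain ⟨x, y, hxy⟩ := hB
    refine ⟨C x y / B x y, LinearMap.ext₂ fun v w ↦ ?_⟩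
    rw [LinearMap.smul_apply, LinearMap.smul_apply, smul_eq_mul, div_mul_eq_mul_div,
      eq_div_iff hxy, apply_mul_apply_eq_of_apply_eq_zero_imp h, mul_comm]

end Proportionality

section FourForms

variable {F V : Type*} [Field F] [AddCommGroup V] [Module F V]

/-- The four-form `ω ∧ η` of two two-forms, evaluated on `(a, b, c, d)`. It is the polarization of
`halfSq`, so that `wedge ω ω = 2 • halfSq ω`. As with `halfSq`, the formula is taken for arbitrary
bilinear forms. -/
def wedge (ω η : V →ₗ[F] V →ₗ[F] F) (a b c d : V) : F :=
  ω a b * η c d - ω a c * η b d + ω a d * η b c +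
    (η a b * ω c d - η a c * ω b d + η a d * ω b c)

/-- The infinitesimal action of an endomorphism `f` on a bilinear form `ω`, that is, the bilinear
form `(v, w) ↦ ω (f v) w + ω v (f w)`. It vanishes if and only if `f` lies in `sp(V, ω)`. -/
def infinitesimalPullback (f : V →ₗ[F] V) (ω : V →ₗ[F] V →ₗ[F] F) : V →ₗ[F] V →ₗ[F] F :=
  ω.compl₁₂ f .id + ω.compl₁₂ .id f

theorem halfSq_smul (r : F) (ω : V →ₗ[F] V →ₗ[F] F) : halfSq (r • ω) = r ^ 2 • halfSq ω := by
  ext a b c d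
  simp only [halfSq, LinearMap.smul_apply, Pi.smul_apply, smul_eq_mul]
  ring

theorem halfSq_neg (ω : V →ₗ[F] V →ₗ[F] F) : halfSq (-ω) = halfSq ω := by
  rw [← neg_one_smul F ω, halfSq_smul, neg_one_sq, one_smul]

theorem wedge_smul_self (r : F) (ω : V →ₗ[F] V →ₗ[F] F) :
    wedge ω (r • ω) = (2 * r) • halfSq ω := by
  ext a b c d
  simp only [wedge, halfSq, LinearMap.smul_apply, Pi.smul_apply, smul_eq_mul]
  ring

theorem wedge_infinitesimalPullback (f : V →ₗ[F] V) (ω : V →ₗ[F] V →ₗ[F] F) (a b c d : V) :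
    wedge ω (infinitesimalPullback f ω) a b c d =
      halfSq ω (f a) b c d + halfSq ω a (f b) c d + halfSq ω a b (f c) d +
        halfSq ω a b c (f d) := by
  simp only [wedge, halfSq, infinitesimalPullback, LinearMap.add_apply, LinearMap.compl₁₂_apply,
    LinearMap.id_apply]
  ring

variable {ω : V →ₗ[F] V →ₗ[F] F}

theorem halfSq_ne_zero (hω : 4 < ω.rank) : halfSq ω ≠ 0 := by
  obtain ⟨x, y, -, -, hxy⟩ := exists_apply_ne_zero_of_four_lt_rank hω 0 0
  obtain ⟨a, b, ⟨hxa, -⟩, ⟨hxb, -⟩, hab⟩ := exists_apply_ne_zero_of_four_lt_rank hω (ω x) 0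
  intro hzero
  have : halfSq ω x y a b = 0 := by rw [hzero]; rfl
  simp [halfSq, hxa, hxb, hxy, hab] at this

theorem apply_eq_zero_of_halfSq_eq (hω : 4 < ω.rank) {β : V →ₗ[F] V →ₗ[F] F}
    (h : halfSq β = halfSq ω) {v c : V} (hvc : β v c = 0) : ω v c = 0 := by
  obtain ⟨a, b, ⟨hωa, hβa⟩, ⟨hωb, hβb⟩, hab⟩ :=
    exists_apply_ne_zero_of_four_lt_rank hω (ω v) (β v)
  have : halfSq β v c a b = halfSq ω v c a b := by rw [h]
  simpa [halfSq, hvc, hωa, hβa, hωb, hβb, hab] using this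

theorem halfSq_eq_halfSq_iff (hω : 4 < ω.rank) {β : V →ₗ[F] V →ₗ[F] F} :
    halfSq β = halfSq ω ↔ β = ω ∨ β = -ω := by
  refine ⟨fun h ↦ ?_, ?_⟩
  · obtain ⟨r, rfl⟩ :=
      exists_eq_smul_of_apply_eq_zero_imp fun _ _ ↦ apply_eq_zero_of_halfSq_eq hω h
    have hr : r ^ 2 = 1 := smul_left_injective F (halfSq_ne_zero hω) <|
      calc r ^ 2 • halfSq (r • β) = r ^ 2 • halfSq β := by rw [h]
        _ = (1 : F) • halfSq (r • β) := by rw [← halfSq_smul, one_smul]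
    rcases sq_eq_one_iff.1 hr with rfl | rfl
    · exact Or.inl (one_smul F _).symm
    · exact Or.inr (LinearMap.ext₂ fun v w ↦ by simp)
  · rintro (rfl | rfl)
    exacts [rfl, halfSq_neg ω]

theorem apply_eq_zero_of_wedge_eq_zero (hω : 4 < ω.rank) {η : V →ₗ[F] V →ₗ[F] F}
    (h : wedge ω η = 0) {v c : V} (hvc : ω v c = 0) : η v c = 0 := by
  obtain ⟨a, b, ⟨hωa, hηa⟩, ⟨hωb, hηb⟩, hab⟩ :=
    exists_apply_ne_zero_of_four_lt_rank hω (ω v) (η v)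
  have : wedge ω η v c a b = 0 := by rw [h]; rfl
  simpa [wedge, hvc, hωa, hηa, hωb, hηb, hab] using this

theorem wedge_eq_zero_iff (h2 : (2 : F) ≠ 0) (hω : 4 < ω.rank) {η : V →ₗ[F] V →ₗ[F] F} :
    wedge ω η = 0 ↔ η = 0 := by
  refine ⟨fun h ↦ ?_, ?_⟩
  · obtain ⟨r, rfl⟩ :=
      exists_eq_smul_of_apply_eq_zero_imp fun _ _ ↦ apply_eq_zero_of_wedge_eq_zero hω h
    have hr : (2 * r) • halfSq ω = 0 := by rw [← wedge_smul_self, h]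
    have h2r : 2 * r = 0 := (smul_eq_zero.1 hr).resolve_right (halfSq_ne_zero hω)
    rw [(mul_eq_zero.1 h2r).resolve_left h2, zero_smul]
  · rintro rfl
    simpa using wedge_smul_self 0 ω

end FourForms

theorem stmt11_general {F : Type*} [Field F] (h2 : (2 : F) ≠ 0) {V : Type*} [AddCommGroup V]
    [Module F V] (ω : V →ₗ[F] V →ₗ[F] F) (hω : 4 < ω.rank) :
    (∀ f : V →ₗ[F] V,
      ((∀ a b c d : V, halfSq ω (f a) (f b) (f c) (f d) = halfSq ω a b c d) ↔
        ((∀ a b : V, ω (f a) (f b) = ω a b) ∨ (∀ a b : V, ω (f a) (f b) = -ω a b)))) ∧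
    ({f : V →ₗ[F] V |
        ∀ a b c d : V,
          halfSq ω (f a) b c d + halfSq ω a (f b) c d + halfSq ω a b (f c) d +
            halfSq ω a b c (f d) = 0} =
      {f : V →ₗ[F] V | ∀ v w : V, ω (f v) w + ω v (f w) = 0}) := by
  refine ⟨fun f ↦ ?_, Set.ext fun f ↦ ?_⟩
  · simpa [funext_iff, LinearMap.ext_iff₂, halfSq] using
      halfSq_eq_halfSq_iff hω (β := ω.compl₁₂ f f)
  · have := wedge_eq_zero_iff h2 hω (η := infinitesimalPullback f ω)
    simp only [funext_iff, wedge_infinitesimalPullback] at this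
    simpa [LinearMap.ext_iff₂, infinitesimalPullback] using this

/-- Let `V` be a six-dimensional vector space over `F ∈ {ℝ,ℂ}`, let
`ω ∈ Λ²V*` be nondegenerate (equivalently `ω ∧ ω ∧ ω ≠ 0`), and set
`Ω := (1/2) ω ∧ ω ∈ Λ⁴V*`.  Then:
(i)  the stabilizer of `Ω` in `GL(V)` consists exactly of the symplectic and the
     anti-symplectic transformations of `(V, ω)`, i.e. `f*Ω = Ω ↔ (f*ω = ω ∨ f*ω = -ω)`;
(ii) `{f ∈ End(V) : ∑ᵢ Ω(v₁,…,f(vᵢ),…,v₄) = 0 for all v₁,…,v₄} = sp(V,ω)`. -/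
theorem stmt11 {F : Type*} [RCLike F] {V : Type*} [AddCommGroup V] [Module F V]
    [FiniteDimensional F V] (hV : finrank F V = 6)
    (ω : V →ₗ[F] V →ₗ[F] F) (halt : ∀ v : V, ω v v = 0)
    (hnd : ∀ v : V, (∀ w : V, ω v w = 0) → v = 0) :
    (∀ f : V ≃ₗ[F] V,
      ((∀ a b c d : V, halfSq ω (f a) (f b) (f c) (f d) = halfSq ω a b c d) ↔
        ((∀ a b : V, ω (f a) (f b) = ω a b) ∨ (∀ a b : V, ω (f a) (f b) = -ω a b)))) ∧
    ({f : V →ₗ[F] V |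
        ∀ a b c d : V,
          halfSq ω (f a) b c d + halfSq ω a (f b) c d + halfSq ω a b (f c) d +
            halfSq ω a b c (f d) = 0} =
      {f : V →ₗ[F] V | ∀ v w : V, ω (f v) w + ω v (f w) = 0}) := by
  have hω : 4 < ω.rank := by rw [rank_eq_finrank_of_separatingLeft hnd, hV]; norm_num
  exact (stmt11_general two_ne_zero ω hω).imp (fun h f ↦ h f) id
end

section
/- Let V be a six-dimensional vector space over F ∈ {ℝ,ℂ} and let Ω ∈ Λ⁴V* be a four-form of length 2. Define V₄ := {v ∈ V : for all w ∈ V, ((w∧v) ⌟ Ω)∧((w∧v) ⌟ Ω) = 0}. Then: (i) V₄ is a four-dimensional subspace of V; (ii) there exists a two-dimensional complement V₂ of V₄ in V such that Ω = ω₂∧ω₄ with ω₂ ∈ Λ²Ann(V₄) nonzero decomposable and ω₄ ∈ Λ²Ann(V₂) of length two, where ω₄ is regarded as a nondegenerate two-form on V₄ via the identification Ann(V₂) ≅ V₄* induced by V = V₂ ⊕ V₄; (iii) the set {f ∈ End(V) : Σ_{i=1}^4 Ω(v₁,…,f(v_i),…,v₄) = 0 for all v₁,…,v₄ ∈ V}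 equals {f ∈ End(V) : f(V₄) ⊆ V₄, pr_{V₄}∘f|_{V₄} = −(tr(f₂)/2)·id_{V₄} + f₄ with f₄ ∈ sp(V₄,ω₄), where f₂ := pr_{V₂}∘f|_{V₂}}. -/
open Module

section AltMachinery

variable {F : Type*} [Field F] {V : Type*} [AddCommGroup V] [Module F V]

/-- The wedge `φ₁ ∧ … ∧ φ_m` of `m` covectors, as an alternating `m`-form on `V`:
`(φ₁ ∧ … ∧ φ_m)(v₁,…,v_m) = det (φ_i (v_j))`. -/
noncomputable def wedgeCov (m : ℕ) (φ : Fin m → Module.Dual F V) :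
    V [⋀^Fin m]→ₗ[F] F :=
  (Matrix.detRowAlternating : (Fin m → F) [⋀^Fin m]→ₗ[F] F).compLinearMap
    (LinearMap.pi φ)

/-- A decomposable alternating `m`-form: a wedge of `m` covectors. -/
def AltDec (m : ℕ) (X : V [⋀^Fin m]→ₗ[F] F) : Prop :=
  ∃ φ : Fin m → Module.Dual F V, X = wedgeCov m φ

/-- The `m`-form `X` is a sum of `l` decomposable `m`-forms. -/
def AltLenLE (m l : ℕ) (X : V [⋀^Fin m]→ₗ[F] F) : Prop :=
  ∃ Y : Fin l → (V [⋀^Fin m]→ₗ[F] F), (∀ i, AltDec m (Y i)) ∧ X = ∑ i, Y i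

/-- The `m`-form `X` has length `l`: it is a sum of `l` decomposable `m`-forms and of no
smaller number of them. -/
def AltHasLen (m l : ℕ) (X : V [⋀^Fin m]→ₗ[F] F) : Prop :=
  AltLenLE m l X ∧ ∀ j < l, ¬ AltLenLE m j X

end AltMachinery

/-!
Write `Ω` as a sum of two decomposable four-forms. The four-dimensional spaces of covectors spanned
by the factors of the two summands have an intersection of dimension at least two, since `V` has
dimension six, and at most two, since otherwise `Ω` would be decomposable. Factoring out a basis
`φ₀, φ₁` of this intersection gives `Ω = ω₂ ∧ ω₄` with `ω₂ = φ₀ ∧ φ₁`, with `V₄` the common kernel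
of `φ₀` and `φ₁`, and with `ω₄` nondegenerate on `V₄`.

If `f` stabilizes `Ω`, then for every `w` the covector `v ↦ ω₂ (w, f v)` on `V₄` has zero wedge
with `ω₄`, hence vanishes, so `f` preserves `V₄`. For such `f` one has
`f · Ω = ω₂ ∧ (f · ω₄ + tr f₂ • ω₄)`, which vanishes if and only if `f · ω₄ = -tr f₂ • ω₄` on `V₄`.
The endomorphism `-(tr f₂ / 2) • id` solves this equation, and the difference of any two solutions
lies in `sp(V₄, ω₄)`.
-/

section WedgeOfCovectors

variable {F : Type*} [Field F] {V : Type*} [AddCommGroup V] [Module F V]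

theorem exists_mem_linearIndependent_vecCons {k : ℕ} {u : Fin k → V}
    (hu : LinearIndependent F u) {A : Submodule F V} (hk : k < finrank F A) :
    ∃ x ∈ A, LinearIndependent F (Matrix.vecCons x u) := by
  by_contra! hdep
  have hA : A ≤ Submodule.span F (Set.range u) := fun x hx ↦ by
    by_contra hxu
    exact hdep x hx (linearIndependent_finCons.2 ⟨hu, hxu⟩)
  have := FiniteDimensional.span_of_finite F (Set.finite_range u)
  have hcard := (Submodule.finrank_mono hA).trans (finrank_range_le_card u)
  rw [Fintype.card_fin] at hcard
  omega

theorem exists_linearIndependent_forall_mem {A : Submodule F V} {k : ℕ} (hk : k ≤ finrank F A) :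
    ∃ u : Fin k → V, LinearIndependent F u ∧ ∀ i, u i ∈ A := by
  obtain ⟨u, hu⟩ := exists_linearIndependent_of_le_finrank hk
  exact ⟨fun i ↦ u i, hu.map' A.subtype (Submodule.ker_subtype A), fun i ↦ (u i).2⟩

theorem wedgeCov_apply_eq_wedgeCov_eval {m : ℕ} (φ : Fin m → Dual F V) (v : Fin m → V) :
    wedgeCov m φ v = wedgeCov m (fun j ↦ Dual.eval F V (v j)) φ :=
  (Matrix.det_transpose _).symm

theorem wedgeCov_vecCons_add {m : ℕ} (u : Fin m → Dual F V) (p q : Dual F V) :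
    wedgeCov (m + 1) (Matrix.vecCons (p + q) u) =
      wedgeCov (m + 1) (Matrix.vecCons p u) + wedgeCov (m + 1) (Matrix.vecCons q u) := by
  ext v
  rw [AlternatingMap.add_apply, wedgeCov_apply_eq_wedgeCov_eval (Matrix.vecCons (p + q) u),
    wedgeCov_apply_eq_wedgeCov_eval (Matrix.vecCons p u),
    wedgeCov_apply_eq_wedgeCov_eval (Matrix.vecCons q u), AlternatingMap.map_vecCons_add]

theorem wedgeCov_vecCons_smul {m : ℕ} (u : Fin m → Dual F V) (c : F) (p : Dual F V) :
    wedgeCov (m + 1) (Matrix.vecCons (c • p) u) = c • wedgeCov (m + 1) (Matrix.vecCons p u) := by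
  ext v
  rw [AlternatingMap.smul_apply, wedgeCov_apply_eq_wedgeCov_eval (Matrix.vecCons (c • p) u),
    wedgeCov_apply_eq_wedgeCov_eval (Matrix.vecCons p u), AlternatingMap.map_vecCons_smul]

theorem linearIndependent_of_wedgeCov_ne_zero {m : ℕ} {φ : Fin m → Dual F V}
    (hφ : wedgeCov m φ ≠ 0) : LinearIndependent F φ := by
  by_contra hdep
  refine hφ (AlternatingMap.ext fun v ↦ ?_)
  rw [wedgeCov_apply_eq_wedgeCov_eval, AlternatingMap.map_linearDependent _ _ hdep,
    AlternatingMap.zero_apply]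

theorem wedgeCov_sum_smul {m : ℕ} (M : Matrix (Fin m) (Fin m) F) (u : Fin m → Dual F V) :
    wedgeCov m (fun i ↦ ∑ j, M i j • u j) = M.det • wedgeCov m u := by
  ext v
  rw [wedgeCov_apply_eq_wedgeCov_eval, AlternatingMap.smul_apply,
    wedgeCov_apply_eq_wedgeCov_eval u]
  refine Eq.trans (congrArg Matrix.det ?_)
    (Matrix.det_mul M (Matrix.of fun j k ↦ u j (v k)))
  ext i k
  simp [Matrix.mul_apply]

theorem exists_wedgeCov_eq_wedgeCov_vecCons {k : ℕ} {φ : Fin (k + 1) → Dual F V}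
    (hφ : wedgeCov (k + 1) φ ≠ 0) {u : Fin k → Dual F V} (hu : LinearIndependent F u)
    (hmem : ∀ i, u i ∈ Submodule.span F (Set.range φ)) :
    ∃ p : Dual F V, wedgeCov (k + 1) φ = wedgeCov (k + 1) (Matrix.vecCons p u) ∧
      Submodule.span F (Set.range (Matrix.vecCons p u)) = Submodule.span F (Set.range φ) := by
  have hfin := finrank_span_eq_card (linearIndependent_of_wedgeCov_ne_zero hφ)
  rw [Fintype.card_fin] at hfin
  have := FiniteDimensional.span_of_finite F (Set.finite_range φ)
  obtain ⟨p, hp, hpu⟩ := exists_mem_linearIndependent_vecCons hu (k.lt_succ_self.trans_eq hfin.symm)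
  have hspan : Submodule.span F (Set.range (Matrix.vecCons p u)) =
      Submodule.span F (Set.range φ) := by
    refine Submodule.eq_of_le_of_finrank_eq (Submodule.span_le.2 ?_) ?_
    · rintro _ ⟨i, rfl⟩
      exact Fin.cases hp hmem i
    · rw [finrank_span_eq_card hpu, hfin, Fintype.card_fin]
  have hcoeff : ∀ i, ∃ c : Fin (k + 1) → F, ∑ j, c j • Matrix.vecCons p u j = φ i := fun i ↦
    (Submodule.mem_span_range_iff_exists_fun F).1 (hspan ▸ Submodule.subset_span ⟨i, rfl⟩)
  choose M hM using hcoeff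
  have hdet : wedgeCov (k + 1) φ =
      (Matrix.of M).det • wedgeCov (k + 1) (Matrix.vecCons p u) := by
    rw [← wedgeCov_sum_smul]
    exact congrArg _ (funext fun i ↦ (hM i).symm)
  have hdet_ne : (Matrix.of M).det ≠ 0 := fun h0 ↦ hφ (by rw [hdet, h0, zero_smul])
  refine ⟨(Matrix.of M).det • p, by rw [wedgeCov_vecCons_smul, hdet], ?_⟩
  rw [← hspan, Matrix.range_cons, Matrix.range_cons, Submodule.span_union, Submodule.span_union,
    Submodule.span_singleton_smul_eq hdet_ne.isUnit]

theorem altDec_wedgeCov_add_of_le_finrank_inf {m : ℕ} {φ ψ : Fin (m + 1) → Dual F V}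
    (hinf : m ≤ finrank F ↥(Submodule.span F (Set.range φ) ⊓ Submodule.span F (Set.range ψ))) :
    AltDec (m + 1) (wedgeCov (m + 1) φ + wedgeCov (m + 1) ψ) := by
  by_cases hφ : wedgeCov (m + 1) φ = 0
  · exact ⟨ψ, by rw [hφ, zero_add]⟩
  by_cases hψ : wedgeCov (m + 1) ψ = 0
  · exact ⟨φ, by rw [hψ, add_zero]⟩
  obtain ⟨u, hu, hmem⟩ := exists_linearIndependent_forall_mem hinf
  obtain ⟨p, hp, -⟩ := exists_wedgeCov_eq_wedgeCov_vecCons hφ hu fun i ↦ (hmem i).1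
  obtain ⟨q, hq, -⟩ := exists_wedgeCov_eq_wedgeCov_vecCons hψ hu fun i ↦ (hmem i).2
  exact ⟨Matrix.vecCons (p + q) u, by rw [hp, hq, wedgeCov_vecCons_add]⟩

theorem exists_wedgeCov_add_eq_of_not_altDec [FiniteDimensional F V] {m : ℕ}
    (hV : finrank F V ≤ m + 4) {φ ψ : Fin (m + 2) → Dual F V}
    (hdec : ¬ AltDec (m + 2) (wedgeCov (m + 2) φ + wedgeCov (m + 2) ψ)) :
    ∃ (u : Fin m → Dual F V) (θ : Fin 4 → Dual F V), LinearIndependent F (Sum.elim u θ) ∧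
      wedgeCov (m + 2) φ + wedgeCov (m + 2) ψ =
        wedgeCov (m + 2) (Matrix.vecCons (θ 0) (Matrix.vecCons (θ 1) u)) +
          wedgeCov (m + 2) (Matrix.vecCons (θ 2) (Matrix.vecCons (θ 3) u)) := by
  have hφ : wedgeCov (m + 2) φ ≠ 0 := fun h0 ↦ hdec ⟨ψ, by rw [h0, zero_add]⟩
  have hψ : wedgeCov (m + 2) ψ ≠ 0 := fun h0 ↦ hdec ⟨φ, by rw [h0, add_zero]⟩
  set A := Submodule.span F (Set.range φ) with hA
  set B := Submodule.span F (Set.range ψ) with hB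
  have hfinA : finrank F A = m + 2 := by
    rw [hA, finrank_span_eq_card (linearIndependent_of_wedgeCov_ne_zero hφ), Fintype.card_fin]
  have hfinB : finrank F B = m + 2 := by
    rw [hB, finrank_span_eq_card (linearIndependent_of_wedgeCov_ne_zero hψ), Fintype.card_fin]
  have hsup : finrank F ↥(A ⊔ B) ≤ m + 4 :=
    (Submodule.finrank_le _).trans (Subspace.dual_finrank_eq.trans_le hV)
  have hsum := Submodule.finrank_sup_add_finrank_inf_eq A B
  have hinf : finrank F ↥(A ⊓ B) < m + 1 :=
    not_le.1 fun hle ↦ hdec (altDec_wedgeCov_add_of_le_finrank_inf hle)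
  obtain ⟨u, hu, hmem⟩ :=
    exists_linearIndependent_forall_mem (show m ≤ finrank F ↥(A ⊓ B) by omega)
  obtain ⟨q, hqA, hqu⟩ := exists_mem_linearIndependent_vecCons hu (A := A) (by omega)
  obtain ⟨s, hsB, hsu⟩ := exists_mem_linearIndependent_vecCons hu (A := B) (by omega)
  obtain ⟨p, hp, hpA⟩ := exists_wedgeCov_eq_wedgeCov_vecCons hφ hqu
    (Fin.cases hqA fun i ↦ (hmem i).1)
  obtain ⟨r, hr, hrB⟩ := exists_wedgeCov_eq_wedgeCov_vecCons hψ hsu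
    (Fin.cases hsB fun i ↦ (hmem i).2)
  refine ⟨u, ![p, q, r, s], ?_, by rw [hp, hr]; rfl⟩
  have hle : A ⊔ B ≤ Submodule.span F (Set.range (Sum.elim u ![p, q, r, s])) := by
    rw [hA, hB, ← hpA, ← hrB, ← Submodule.span_union, Set.Sum.elim_range]
    apply Submodule.span_mono
    simp only [Matrix.range_cons, Matrix.range_empty]
    tauto_set
  rw [linearIndependent_iff_card_le_finrank_span, Fintype.card_sum, Fintype.card_fin,
    Fintype.card_fin]
  exact le_trans (by omega) (Submodule.finrank_mono hle)

theorem AltHasLen.exists_wedgeCov_add {m : ℕ} {Ω : V [⋀^Fin m]→ₗ[F] F} (hΩ : AltHasLen m 2 Ω) :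
    ∃ φ ψ : Fin m → Dual F V, Ω = wedgeCov m φ + wedgeCov m ψ := by
  obtain ⟨⟨Y, hY, rfl⟩, -⟩ := hΩ
  obtain ⟨φ, hφ⟩ := hY 0
  obtain ⟨ψ, hψ⟩ := hY 1
  exact ⟨φ, ψ, by rw [Fin.sum_univ_two, hφ, hψ]⟩

theorem AltHasLen.not_altDec {m : ℕ} {Ω : V [⋀^Fin m]→ₗ[F] F} (hΩ : AltHasLen m 2 Ω) :
    ¬ AltDec m Ω :=
  fun hdec ↦ hΩ.2 1 one_lt_two ⟨fun _ ↦ Ω, fun _ ↦ hdec, by rw [Fin.sum_univ_one]⟩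

end WedgeOfCovectors

section TwoForms

variable {R : Type*} [CommRing R] {M : Type*} [AddCommGroup M] [Module R M]

/-- The wedge `a ∧ b` of two covectors, as a bilinear form. -/
def covectorWedge (a b : Dual R M) : LinearMap.BilinForm R M :=
  a.smulRight b - b.smulRight a

theorem covectorWedge_apply (a b : Dual R M) (x y : M) :
    covectorWedge a b x y = a x * b y - a y * b x := by
  simp [covectorWedge, mul_comm]

theorem covectorWedge_isAlt (a b : Dual R M) : (covectorWedge a b).IsAlt := fun x ↦ by
  rw [covectorWedge_apply, sub_self]

/-- The wedge `α ∧ β` of two two-forms, as a function of four vectors: the sum over the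
`(2, 2)`-shuffles, so that no division by `4` occurs. -/
def twoFormWedge (α β : LinearMap.BilinForm R M) (a b c d : M) : R :=
  α a b * β c d - α a c * β b d + α a d * β b c + α b c * β a d - α b d * β a c + α c d * β a b

theorem twoFormWedge_add_right (α β γ : LinearMap.BilinForm R M) (a b c d : M) :
    twoFormWedge α (β + γ) a b c d = twoFormWedge α β a b c d + twoFormWedge α γ a b c d := by
  simp only [twoFormWedge, LinearMap.add_apply]
  ring

theorem twoFormWedge_smul_comm (t : R) (α β : LinearMap.BilinForm R M) (a b c d : M) :
    twoFormWedge (t • α) β a b c d = twoFormWedge α (t • β) a b c d := by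
  simp only [twoFormWedge, LinearMap.smul_apply, smul_eq_mul]
  ring

/-- The Pfaffian of the Gram matrix of a two-form `ω` at four vectors. It is the value of
`(ω ∧ ω) / 2`, so `ω ∧ ω = 0` is expressed by its vanishing. -/
def pfaffian {X : Type*} (ω : X → X → R) (x y z t : X) : R :=
  ω x y * ω z t - ω x z * ω y t + ω x t * ω y z

theorem pfaffian_mul_sub_mul {X : Type*} (c d : X → R) (x y z t : X) :
    pfaffian (fun u v ↦ c u * d v - c v * d u) x y z t = 0 := by
  unfold pfaffian
  ring

-- Contracting `l ∧ ω = 0` with `v` gives `l v • ω = l ∧ ω v`, whose wedge with `ω` vanishes.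
theorem eq_zero_of_wedge_eq_zero_of_pfaffian_ne_zero [NoZeroDivisors R] [NeZero (2 : R)] {X : Type*}
    {ω : X → X → R} {l : X → R}
    (hl : ∀ x y z, l x * ω y z - l y * ω x z + l z * ω x y = 0)
    {x y z t : X} (hpf : pfaffian ω x y z t ≠ 0) (v : X) : l v = 0 := by
  have h2 : 2 * pfaffian ω x y z t * l v = 0 := by
    unfold pfaffian
    linear_combination ω z t * hl v x y - ω y t * hl v x z + ω y z * hl v x t +
      ω x t * hl v y z - ω x z * hl v y t + ω x y * hl v z t +
      ω v t * hl x y z - ω v z * hl x y t + ω v y * hl x z t - ω v x * hl y z t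
  exact (mul_eq_zero.1 h2).resolve_left (mul_ne_zero two_ne_zero hpf)

/-- The derivation action of an endomorphism `f` on a bilinear form:
`(x, y) ↦ ω (f x) y + ω x (f y)`, which is minus the action of `𝔤𝔩(M)` on two-forms. -/
def derivationAction (f : M →ₗ[R] M) (ω : LinearMap.BilinForm R M) : LinearMap.BilinForm R M :=
  ω.compLeft f + ω.compRight f

theorem derivationAction_apply (f : M →ₗ[R] M) (ω : LinearMap.BilinForm R M) (x y : M) :
    derivationAction f ω x y = ω (f x) y + ω x (f y) := rfl

theorem derivationAction_isAlt (f : M →ₗ[R] M) {ω : LinearMap.BilinForm R M} (hω : ω.IsAlt) :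
    (derivationAction f ω).IsAlt := fun x ↦ by
  rw [derivationAction_apply, ← hω.neg_eq x (f x), neg_add_cancel]

/-- The derivation action of an endomorphism `f` on a function of four vectors; its vanishing on
a four-form says that `f` lies in the infinitesimal stabilizer. -/
def derivationActionFour (f : M →ₗ[R] M) (Θ : M → M → M → M → R) (a b c d : M) : R :=
  Θ (f a) b c d + Θ a (f b) c d + Θ a b (f c) d + Θ a b c (f d)

theorem derivationActionFour_twoFormWedge (f : M →ₗ[R] M) (α β : LinearMap.BilinForm R M)
    (a b c d : M) :
    derivationActionFour f (twoFormWedge α β) a b c d =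
      twoFormWedge (derivationAction f α) β a b c d +
        twoFormWedge α (derivationAction f β) a b c d := by
  simp only [derivationActionFour, twoFormWedge, derivationAction_apply]
  ring

end TwoForms

section FieldTwoForms

variable {F : Type*} [Field F] {V : Type*} [AddCommGroup V] [Module F V]

theorem wedgeCov_four_eq_twoFormWedge (p q : Dual F V) (u : Fin 2 → Dual F V) (a b c d : V) :
    wedgeCov 4 (Matrix.vecCons p (Matrix.vecCons q u)) ![a, b, c, d] =
      twoFormWedge (covectorWedge (u 0) (u 1)) (covectorWedge p q) a b c d := by
  change Matrix.det (Matrix.of fun i j ↦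
    Matrix.vecCons p (Matrix.vecCons q u) j (![a, b, c, d] i)) = _
  simp [Matrix.det_succ_row_zero, Fin.sum_univ_succ, Fin.succAbove, twoFormWedge,
    covectorWedge_apply]
  ring

theorem AltHasLen.exists_eq_twoFormWedge [FiniteDimensional F V] (hV : finrank F V ≤ 6)
    {Ω : V [⋀^Fin 4]→ₗ[F] F} (hΩ : AltHasLen 4 2 Ω) :
    ∃ (φ : Fin 2 → Dual F V) (θ : Fin 4 → Dual F V), LinearIndependent F (Sum.elim φ θ) ∧
      ∀ a b c d, Ω ![a, b, c, d] = twoFormWedge (covectorWedge (φ 0) (φ 1))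
        (covectorWedge (θ 0) (θ 1) + covectorWedge (θ 2) (θ 3)) a b c d := by
  have hdec := hΩ.not_altDec
  obtain ⟨α, β, rfl⟩ := hΩ.exists_wedgeCov_add
  obtain ⟨φ, θ, hli, hsum⟩ := exists_wedgeCov_add_eq_of_not_altDec (m := 2) hV hdec
  refine ⟨φ, θ, hli, fun a b c d ↦ ?_⟩
  rw [hsum, AlternatingMap.add_apply, wedgeCov_four_eq_twoFormWedge,
    wedgeCov_four_eq_twoFormWedge, twoFormWedge_add_right]

end FieldTwoForms

section Biorthogonal

variable {R : Type*} [CommRing R] {M : Type*} [AddCommGroup M] [Module R M]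
  {ι κ : Type*} [DecidableEq ι]

/-- The covectors `φ` and the vectors `e` are dual to each other: `φ i (e j) = δ i j`. In contrast
to `Module.DualBases`, the `e i` need not span. -/
def IsBiorthogonal (φ : ι → Dual R M) (e : ι → M) : Prop :=
  ∀ i j, φ i (e j) = if i = j then 1 else 0

namespace IsBiorthogonal

variable {φ : ι → Dual R M} {e : ι → M}

theorem apply_self (h : IsBiorthogonal φ e) (i : ι) : φ i (e i) = 1 := by
  rw [h, if_pos rfl]

theorem apply_of_ne (h : IsBiorthogonal φ e) {i j : ι} (hij : i ≠ j) : φ i (e j) = 0 := by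
  rw [h, if_neg hij]

theorem comp [DecidableEq κ] (h : IsBiorthogonal φ e) {g : κ → ι} (hg : g.Injective) :
    IsBiorthogonal (φ ∘ g) (e ∘ g) := fun i j ↦ by
  simp only [Function.comp_apply, h (g i), hg.eq_iff]

theorem apply_eq_zero_of_mem_span_comp (h : IsBiorthogonal φ e) {g : κ → ι} {i : ι}
    (hi : ∀ k, i ≠ g k) {x : M} (hx : x ∈ Submodule.span R (Set.range (e ∘ g))) : φ i x = 0 :=
  (Submodule.span_le (p := (φ i).ker)).2 (Set.range_subset_iff.2 fun k ↦ h.apply_of_ne (hi k)) hx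

theorem mem_ker_pi_comp (h : IsBiorthogonal φ e) {g : κ → ι} {j : ι} (hj : ∀ k, g k ≠ j) :
    e j ∈ (LinearMap.pi (φ ∘ g)).ker :=
  LinearMap.mem_ker.2 (funext fun k ↦ h.apply_of_ne (hj k))

theorem linearIndependent (h : IsBiorthogonal φ e) : LinearIndependent R e :=
  .of_pairwise_dual_eq_zero_one e φ (fun _ _ ↦ h.apply_of_ne) h.apply_self

theorem apply_sum_smul [Fintype ι] (h : IsBiorthogonal φ e) (c : ι → R) (i : ι) :
    φ i (∑ j, c j • e j) = c i := by
  simp [h i]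

theorem sub_sum_smul_mem_ker [Fintype ι] (h : IsBiorthogonal φ e) (x : M) :
    x - ∑ i, φ i x • e i ∈ (LinearMap.pi φ).ker :=
  LinearMap.mem_ker.2 (funext fun i ↦ by
    rw [LinearMap.pi_apply, map_sub, h.apply_sum_smul fun i ↦ φ i x, sub_self, Pi.zero_apply])

theorem isCompl_span_ker [Finite ι] (h : IsBiorthogonal φ e) :
    IsCompl (Submodule.span R (Set.range e)) (LinearMap.pi φ).ker := by
  have := Fintype.ofFinite ι
  constructor
  · refine Submodule.disjoint_def.2 fun x hx hker ↦ ?_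
    obtain ⟨c, rfl⟩ := (Submodule.mem_span_range_iff_exists_fun R).1 hx
    have hc : ∀ i, c i = 0 := fun i ↦ (h.apply_sum_smul c i).symm.trans (congrFun hker i)
    simp only [hc, zero_smul, Finset.sum_const_zero]
  · refine Submodule.codisjoint_iff_exists_add_eq.2 fun x ↦
      ⟨∑ i, φ i x • e i, _, ?_, h.sub_sum_smul_mem_ker x, add_sub_cancel _ x⟩
    exact (Submodule.mem_span_range_iff_exists_fun R).2 ⟨_, rfl⟩

theorem apply_map_eq_sum [Fintype ι] (h : IsBiorthogonal φ e) {f : M →ₗ[R] M}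
    (hf : ∀ x ∈ (LinearMap.pi φ).ker, f x ∈ (LinearMap.pi φ).ker) (i : ι) (x : M) :
    φ i (f x) = ∑ j, φ j x * φ i (f (e j)) := by
  have hker : φ i (f (x - ∑ j, φ j x • e j)) = 0 := congrFun (hf _ (h.sub_sum_smul_mem_ker x)) i
  rw [map_sub, map_sub, sub_eq_zero] at hker
  rw [hker]
  simp only [map_sum, map_smul, smul_eq_mul]

theorem projectionOnto_eq_sum [Fintype ι] (h : IsBiorthogonal φ e) {W : Submodule R M}
    (hc : IsCompl W (LinearMap.pi φ).ker) (he : ∀ i, e i ∈ W) (x : M) :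
    W.projectionOnto _ hc x = ∑ i, φ i x • (⟨e i, he i⟩ : W) := by
  have hx := (Submodule.projectionOnto_apply_eq_zero_iff hc).2 (h.sub_sum_smul_mem_ker x)
  rw [map_sub, sub_eq_zero] at hx
  rw [hx, map_sum]
  refine Finset.sum_congr rfl fun i _ ↦ ?_
  rw [map_smul, Submodule.projectionOnto_apply_of_mem_left hc (he i)]

theorem trace_projectionOnto_comp [Fintype ι] (h : IsBiorthogonal φ e) {W : Submodule R M}
    [Module.Free R W] [Module.Finite R W] (hc : IsCompl W (LinearMap.pi φ).ker)
    (he : ∀ i, e i ∈ W) (f : M →ₗ[R] M) :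
    LinearMap.trace R W (W.projectionOnto _ hc ∘ₗ f ∘ₗ W.subtype) = ∑ i, φ i (f (e i)) := by
  have hsum : W.projectionOnto _ hc ∘ₗ f ∘ₗ W.subtype =
      ∑ i, (φ i ∘ₗ f ∘ₗ W.subtype).smulRight (⟨e i, he i⟩ : W) :=
    LinearMap.ext fun x ↦ by simp [h.projectionOnto_eq_sum hc he]
  rw [hsum, map_sum]
  exact Finset.sum_congr rfl fun i _ ↦ LinearMap.trace_smulRight _ _

end IsBiorthogonal

theorem exists_isBiorthogonal [Finite ι] {F : Type*} [Field F] {V : Type*} [AddCommGroup V]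
    [Module F V] {φ : ι → Dual F V} (hφ : LinearIndependent F φ) :
    ∃ e : ι → V, IsBiorthogonal φ e := by
  have := Fintype.ofFinite ι
  have hinj : Function.Injective (LinearMap.pi φ).dualMap := by
    refine (injective_iff_map_eq_zero _).2 fun g hg ↦ ?_
    have hsum : ∑ i, g (fun j ↦ if i = j then 1 else 0) • φ i = 0 := by
      ext x
      rw [← hg, LinearMap.dualMap_apply, LinearMap.pi_apply_eq_sum_univ g]
      simp [mul_comm]
    refine LinearMap.ext fun c ↦ ?_
    rw [LinearMap.pi_apply_eq_sum_univ g]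
    simp [Fintype.linearIndependent_iff.1 hφ _ hsum]
  choose e he using fun j ↦ LinearMap.dualMap_injective_iff.1 hinj (Pi.single j 1)
  refine ⟨e, fun i j ↦ ?_⟩
  rw [← Pi.single_apply, ← he, LinearMap.pi_apply]

end Biorthogonal

section CovectorPair

variable {R : Type*} [CommRing R] {M : Type*} [AddCommGroup M] [Module R M]
  {φ : Fin 2 → Dual R M} {e : Fin 2 → M} {ω : LinearMap.BilinForm R M}

theorem mem_ker_pi_fin_two {x : M} : x ∈ (LinearMap.pi φ).ker ↔ φ 0 x = 0 ∧ φ 1 x = 0 := by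
  rw [LinearMap.mem_ker, funext_iff, Fin.forall_fin_two]
  rfl

theorem twoFormWedge_covectorWedge_of_mem_ker (v w : M) {x y : M}
    (hx : x ∈ (LinearMap.pi φ).ker) (hy : y ∈ (LinearMap.pi φ).ker) :
    twoFormWedge (covectorWedge (φ 0) (φ 1)) ω w v x y =
      covectorWedge (φ 0) (φ 1) w v * ω x y := by
  rw [mem_ker_pi_fin_two] at hx hy
  simp [twoFormWedge, covectorWedge_apply, hx, hy]

namespace IsBiorthogonal

theorem mem_ker_iff_forall_covectorWedge_eq_zero (h : IsBiorthogonal φ e) {x : M} :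
    x ∈ (LinearMap.pi φ).ker ↔ ∀ w, covectorWedge (φ 0) (φ 1) w x = 0 := by
  rw [mem_ker_pi_fin_two]
  constructor
  · rintro ⟨h0, h1⟩ w
    rw [covectorWedge_apply, h0, h1, mul_zero, zero_mul, sub_zero]
  · refine fun hx ↦ ⟨?_, ?_⟩
    · simpa [covectorWedge_apply, h 0 1, h 1 1] using hx (e 1)
    · simpa [covectorWedge_apply, h 0 0, h 1 0] using hx (e 0)

theorem covectorWedge_apply_eq_one (h : IsBiorthogonal φ e) :
    covectorWedge (φ 0) (φ 1) (e 0) (e 1) = 1 := by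
  simp [covectorWedge_apply, h _ _]

theorem pfaffian_covectorWedge_add {θ : Fin 4 → Dual R M} {e : Fin 4 → M}
    (h : IsBiorthogonal θ e) :
    pfaffian ((covectorWedge (θ 0) (θ 1) + covectorWedge (θ 2) (θ 3)) · ·)
      (e 0) (e 1) (e 2) (e 3) = 1 := by
  simp [pfaffian, covectorWedge_apply, h _ _]

theorem derivationAction_covectorWedge (h : IsBiorthogonal φ e) {f : M →ₗ[R] M}
    (hf : ∀ x ∈ (LinearMap.pi φ).ker, f x ∈ (LinearMap.pi φ).ker) :
    derivationAction f (covectorWedge (φ 0) (φ 1)) =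
      (∑ i, φ i (f (e i))) • covectorWedge (φ 0) (φ 1) := by
  ext x y
  simp only [derivationAction_apply, covectorWedge_apply, h.apply_map_eq_sum hf _ x,
    h.apply_map_eq_sum hf _ y, Fin.sum_univ_two, LinearMap.smul_apply, smul_eq_mul]
  ring

theorem twoFormWedge_covectorWedge_eq_zero_iff (h : IsBiorthogonal φ e) (hω : ω.IsAlt) :
    (∀ a b c d, twoFormWedge (covectorWedge (φ 0) (φ 1)) ω a b c d = 0) ↔
      ∀ x ∈ (LinearMap.pi φ).ker, ∀ y ∈ (LinearMap.pi φ).ker, ω x y = 0 := by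
  constructor
  · intro hwedge x hx y hy
    rw [mem_ker_pi_fin_two] at hx hy
    simpa [twoFormWedge, covectorWedge_apply, h _ _, hx, hy] using hwedge (e 0) (e 1) x y
  · intro hker a b c d
    have hexpand : ∀ x y, ω x y = φ 0 x * ω (e 0) y - φ 0 y * ω (e 0) x + φ 1 x * ω (e 1) y -
        φ 1 y * ω (e 1) x - (φ 0 x * φ 1 y - φ 1 x * φ 0 y) * ω (e 0) (e 1) := fun x y ↦ by
      have hxy := hker _ (h.sub_sum_smul_mem_ker x) _ (h.sub_sum_smul_mem_ker y)
      simp only [Fin.sum_univ_two, map_sub, map_add, map_smul, LinearMap.sub_apply,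
        LinearMap.add_apply, LinearMap.smul_apply, smul_eq_mul, hω (e _), ← hω.neg_eq (e 0) x,
        ← hω.neg_eq (e 1) x, ← hω.neg_eq (e 0) (e 1)] at hxy
      linear_combination hxy
    rw [twoFormWedge, hexpand a b, hexpand a c, hexpand a d, hexpand b c, hexpand b d, hexpand c d]
    simp only [covectorWedge_apply]
    ring

variable [NoZeroDivisors R]

theorem mem_ker_iff_forall_pfaffian_eq_zero (h : IsBiorthogonal φ e)
    (hpf : ∃ x y z t : (LinearMap.pi φ).ker, pfaffian (ω · ·) (x : M) y z t ≠ 0) {v : M} :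
    v ∈ (LinearMap.pi φ).ker ↔ ∀ w x y z t,
      pfaffian (twoFormWedge (covectorWedge (φ 0) (φ 1)) ω w v) x y z t = 0 := by
  constructor
  · intro hv w x y z t
    rw [mem_ker_pi_fin_two] at hv
    simp only [pfaffian, twoFormWedge, covectorWedge_apply, hv]
    ring
  · obtain ⟨x₀, y₀, z₀, t₀, hpf⟩ := hpf
    intro hpf_zero
    refine h.mem_ker_iff_forall_covectorWedge_eq_zero.2 fun w ↦ ?_
    have hsq : covectorWedge (φ 0) (φ 1) w v ^ 2 * pfaffian (ω · ·) (x₀ : M) y₀ z₀ t₀ = 0 := by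
      rw [← hpf_zero w x₀ y₀ z₀ t₀]
      simp only [pfaffian, twoFormWedge_covectorWedge_of_mem_ker _ _ (SetLike.coe_mem _)
        (SetLike.coe_mem _)]
      ring
    exact (pow_eq_zero_iff two_ne_zero).1 ((mul_eq_zero.1 hsq).resolve_right hpf)

theorem map_mem_ker_of_derivationActionFour_eq_zero [NeZero (2 : R)] (h : IsBiorthogonal φ e)
    (hpf : ∃ x y z t : (LinearMap.pi φ).ker, pfaffian (ω · ·) (x : M) y z t ≠ 0) {f : M →ₗ[R] M}
    (hf : ∀ a b c d,
      derivationActionFour f (twoFormWedge (covectorWedge (φ 0) (φ 1)) ω) a b c d = 0)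
    {v : M} (hv : v ∈ (LinearMap.pi φ).ker) : f v ∈ (LinearMap.pi φ).ker := by
  obtain ⟨x₀, y₀, z₀, t₀, hpf⟩ := hpf
  refine h.mem_ker_iff_forall_covectorWedge_eq_zero.2 fun w ↦ ?_
  refine eq_zero_of_wedge_eq_zero_of_pfaffian_ne_zero
    (ω := fun x y : (LinearMap.pi φ).ker ↦ ω x y)
    (l := fun x : (LinearMap.pi φ).ker ↦ covectorWedge (φ 0) (φ 1) w (f x))
    (fun x y z ↦ ?_) hpf ⟨v, hv⟩
  have hwxyz := hf w x y z
  have hx := mem_ker_pi_fin_two.1 x.2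
  have hy := mem_ker_pi_fin_two.1 y.2
  have hz := mem_ker_pi_fin_two.1 z.2
  simp only [derivationActionFour, twoFormWedge, covectorWedge_apply, hx, hy, hz] at hwxyz ⊢
  linear_combination hwxyz

theorem derivationActionFour_twoFormWedge_eq_zero_iff [NeZero (2 : R)] (h : IsBiorthogonal φ e)
    (hω : ω.IsAlt)
    (hpf : ∃ x y z t : (LinearMap.pi φ).ker, pfaffian (ω · ·) (x : M) y z t ≠ 0) {f : M →ₗ[R] M} :
    (∀ a b c d, derivationActionFour f (twoFormWedge (covectorWedge (φ 0) (φ 1)) ω) a b c d = 0) ↔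
    (∀ x ∈ (LinearMap.pi φ).ker, f x ∈ (LinearMap.pi φ).ker) ∧
      ∀ x ∈ (LinearMap.pi φ).ker, ∀ y ∈ (LinearMap.pi φ).ker,
        ω (f x) y + ω x (f y) = -(∑ i, φ i (f (e i))) * ω x y := by
  have hiff (hker : ∀ x ∈ (LinearMap.pi φ).ker, f x ∈ (LinearMap.pi φ).ker) :
      (∀ a b c d, derivationActionFour f (twoFormWedge (covectorWedge (φ 0) (φ 1)) ω) a b c d = 0) ↔
      ∀ x ∈ (LinearMap.pi φ).ker, ∀ y ∈ (LinearMap.pi φ).ker,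
        ω (f x) y + ω x (f y) = -(∑ i, φ i (f (e i))) * ω x y := by
    simp only [derivationActionFour_twoFormWedge, h.derivationAction_covectorWedge hker,
      twoFormWedge_smul_comm, ← twoFormWedge_add_right]
    rw [h.twoFormWedge_covectorWedge_eq_zero_iff]
    · simp only [LinearMap.add_apply, LinearMap.smul_apply, smul_eq_mul, derivationAction_apply,
        neg_mul, add_comm (_ * _), add_eq_zero_iff_eq_neg]
    · intro x
      rw [LinearMap.add_apply, LinearMap.add_apply, derivationAction_isAlt f hω, add_zero,
        LinearMap.smul_apply, LinearMap.smul_apply, hω x, smul_zero]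
  exact ⟨fun hf ↦ have hker := fun x ↦ h.map_mem_ker_of_derivationActionFour_eq_zero hpf hf
    ⟨hker, (hiff hker).1 hf⟩, fun hf ↦ (hiff hf.1).2 hf.2⟩

end IsBiorthogonal

end CovectorPair

section Symplectic

variable {F : Type*} [Field F] [NeZero (2 : F)] {V : Type*} [AddCommGroup V] [Module F V]

theorem exists_skew_add_smul_iff (ω : LinearMap.BilinForm F V) (g : V →ₗ[F] V) (T : F) :
    (∃ g₀ : V →ₗ[F] V, (∀ x y, ω (g₀ x) y + ω x (g₀ y) = 0) ∧ ∀ x, g x = -(T / 2) • x + g₀ x) ↔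
      ∀ x y, ω (g x) y + ω x (g y) = -T * ω x y := by
  have htwo : T / 2 + T / 2 = T := add_halves T
  constructor
  · rintro ⟨g₀, hskew, hg⟩ x y
    simp only [hg, map_add, map_smul, LinearMap.add_apply, LinearMap.smul_apply, smul_eq_mul]
    linear_combination hskew x y - ω x y * htwo
  · refine fun hg ↦ ⟨g + (T / 2) • LinearMap.id, fun x y ↦ ?_, fun x ↦ ?_⟩
    · simp only [map_add, map_smul, LinearMap.add_apply, LinearMap.smul_apply,
        LinearMap.id_apply, smul_eq_mul]
      linear_combination hg x y + ω x y * htwo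
    · simp only [LinearMap.add_apply, LinearMap.smul_apply, LinearMap.id_apply]
      module

theorem IsBiorthogonal.derivationActionFour_twoFormWedge_eq_zero_iff_exists_skew
    {φ : Fin 2 → Dual F V} {e : Fin 2 → V} (h : IsBiorthogonal φ e)
    {ω : LinearMap.BilinForm F V} (hω : ω.IsAlt)
    (hpf : ∃ x y z t : (LinearMap.pi φ).ker, pfaffian (ω · ·) (x : V) y z t ≠ 0)
    {W : Submodule F V} [FiniteDimensional F W] (hc : IsCompl W (LinearMap.pi φ).ker)
    (he : ∀ i, e i ∈ W) {f : V →ₗ[F] V} :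
    (∀ a b c d, derivationActionFour f (twoFormWedge (covectorWedge (φ 0) (φ 1)) ω) a b c d = 0) ↔
    (∀ x ∈ (LinearMap.pi φ).ker, f x ∈ (LinearMap.pi φ).ker) ∧
      ∃ f₄ : (LinearMap.pi φ).ker →ₗ[F] (LinearMap.pi φ).ker,
        (∀ x y : (LinearMap.pi φ).ker, ω (f₄ x) y + ω x (f₄ y) = 0) ∧
        ∀ x : (LinearMap.pi φ).ker, (LinearMap.pi φ).ker.projectionOnto W hc.symm (f x) =
          -(LinearMap.trace F W (W.projectionOnto _ hc ∘ₗ f ∘ₗ W.subtype) / 2) • x + f₄ x := by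
  rw [h.derivationActionFour_twoFormWedge_eq_zero_iff hω hpf, h.trace_projectionOnto_comp hc he]
  refine and_congr_right fun hf ↦ ?_
  have hproj (x : (LinearMap.pi φ).ker) :
      (LinearMap.pi φ).ker.projectionOnto W hc.symm (f x) = f.restrict hf x :=
    Submodule.projectionOnto_apply_of_mem_left _ (hf x x.2)
  simp only [hproj]
  have hskew := exists_skew_add_smul_iff (ω.restrict (LinearMap.pi φ).ker) (f.restrict hf)
    (∑ i, φ i (f (e i)))
  exact ⟨fun hder ↦ hskew.2 fun x y ↦ hder x x.2 y y.2,
    fun hex x hx y hy ↦ hskew.1 hex ⟨x, hx⟩ ⟨y, hy⟩⟩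

end Symplectic

theorem stmt12_general {F : Type*} [Field F] [NeZero (2 : F)] {V : Type*} [AddCommGroup V]
    [Module F V] (hV : finrank F V = 6)
    (Ω : V [⋀^Fin 4]→ₗ[F] F) (hΩ : AltHasLen 4 2 Ω) :
    ∃ V₄ : Submodule F V,
      (V₄ : Set V) = {v : V | ∀ w x y z t : V,
          Ω ![w, v, x, y] * Ω ![w, v, z, t] - Ω ![w, v, x, z] * Ω ![w, v, y, t] +
            Ω ![w, v, x, t] * Ω ![w, v, y, z] = 0} ∧
      finrank F ↥V₄ = 4 ∧
      ∃ V₂ : Submodule F V, ∃ hc : IsCompl V₂ V₄, finrank F ↥V₂ = 2 ∧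
        ∃ ω₂ ω₄ : V → V → F,
          (∃ a b : Module.Dual F V, (∀ x ∈ V₄, a x = 0) ∧ (∀ x ∈ V₄, b x = 0) ∧
            ω₂ = fun x y => a x * b y - a y * b x) ∧
          ω₂ ≠ 0 ∧
          (∃ c₁ d₁ c₂ d₂ : Module.Dual F V,
            (∀ x ∈ V₂, c₁ x = 0) ∧ (∀ x ∈ V₂, d₁ x = 0) ∧
            (∀ x ∈ V₂, c₂ x = 0) ∧ (∀ x ∈ V₂, d₂ x = 0) ∧
            ω₄ = fun x y =>
              (c₁ x * d₁ y - c₁ y * d₁ x) + (c₂ x * d₂ y - c₂ y * d₂ x)) ∧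
          (¬ ∃ c d : Module.Dual F V, ω₄ = fun x y => c x * d y - c y * d x) ∧
          (∀ a b c d : V,
            Ω ![a, b, c, d] =
              ω₂ a b * ω₄ c d - ω₂ a c * ω₄ b d + ω₂ a d * ω₄ b c +
                ω₂ b c * ω₄ a d - ω₂ b d * ω₄ a c + ω₂ c d * ω₄ a b) ∧
          ({f : V →ₗ[F] V |
              ∀ a b c d : V,
                Ω ![f a, b, c, d] + Ω ![a, f b, c, d] + Ω ![a, b, f c, d] +
                  Ω ![a, b, c, f d] = 0} =
            {f : V →ₗ[F] V |
              (∀ x ∈ V₄, f x ∈ V₄) ∧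
              ∃ f₄ : ↥V₄ →ₗ[F] ↥V₄,
                (∀ x y : ↥V₄, ω₄ ↑(f₄ x) ↑y + ω₄ ↑x ↑(f₄ y) = 0) ∧
                ∀ x : ↥V₄,
                  (V₄.projectionOnto V₂ hc.symm) (f ↑x) =
                    -((LinearMap.trace F ↥V₂)
                        ((V₂.projectionOnto V₄ hc) ∘ₗ f ∘ₗ V₂.subtype) / 2) • x +
                      f₄ x}) := by
  have := FiniteDimensional.of_finrank_pos (K := F) (V := V) (by omega)
  obtain ⟨φ, θ, hli, hΩ_eq⟩ := hΩ.exists_eq_twoFormWedge hV.le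
  obtain ⟨e, he⟩ := exists_isBiorthogonal hli
  have hφ : IsBiorthogonal φ (e ∘ Sum.inl) := he.comp Sum.inl_injective
  have hθ : IsBiorthogonal θ (e ∘ Sum.inr) := he.comp Sum.inr_injective
  have hmem (i) : e (Sum.inr i) ∈ (LinearMap.pi φ).ker := he.mem_ker_pi_comp fun _ ↦ Sum.inl_ne_inr
  have hθ_zero (i) : ∀ x ∈ Submodule.span F (Set.range (e ∘ Sum.inl)), θ i x = 0 := fun _ ↦
    he.apply_eq_zero_of_mem_span_comp (i := Sum.inr i) fun _ ↦ Sum.inr_ne_inl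
  set ω := covectorWedge (θ 0) (θ 1) + covectorWedge (θ 2) (θ 3)
  have hω : ω.IsAlt := (covectorWedge_isAlt _ _).add (covectorWedge_isAlt _ _)
  have hpf : ∃ x y z t : (LinearMap.pi φ).ker, pfaffian (ω · ·) (x : V) y z t ≠ 0 :=
    ⟨⟨_, hmem 0⟩, ⟨_, hmem 1⟩, ⟨_, hmem 2⟩, ⟨_, hmem 3⟩,
      hθ.pfaffian_covectorWedge_add.trans_ne one_ne_zero⟩
  have hrank := (finrank_span_eq_card hφ.linearIndependent).trans (Fintype.card_fin 2)
  have hsum := Submodule.finrank_add_eq_of_isCompl hφ.isCompl_span_ker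
  simp only [hΩ_eq]
  refine ⟨(LinearMap.pi φ).ker, Set.ext fun v ↦ hφ.mem_ker_iff_forall_pfaffian_eq_zero hpf,
    by omega, _, hφ.isCompl_span_ker, hrank, (covectorWedge (φ 0) (φ 1) · ·), (ω · ·),
    ⟨φ 0, φ 1, fun x hx ↦ congrFun hx 0, fun x hx ↦ congrFun hx 1,
      funext₂ (covectorWedge_apply _ _)⟩,
    fun h0 ↦ one_ne_zero (hφ.covectorWedge_apply_eq_one.symm.trans (congrFun₂ h0 _ _)),
    ⟨θ 0, θ 1, θ 2, θ 3, hθ_zero 0, hθ_zero 1, hθ_zero 2, hθ_zero 3, ?_⟩, ?_,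
    fun _ _ _ _ ↦ rfl, Set.ext fun f ↦ ?_⟩
  · simp only [ω, LinearMap.add_apply, covectorWedge_apply]
  · rintro ⟨c, d, hcd⟩
    obtain ⟨x, y, z, t, hpf⟩ := hpf
    exact hpf (hcd ▸ pfaffian_mul_sub_mul c d _ _ _ _)
  · exact hφ.derivationActionFour_twoFormWedge_eq_zero_iff_exists_skew hω hpf
      hφ.isCompl_span_ker fun i ↦ Submodule.subset_span ⟨i, rfl⟩

/-- Let `V` be a six-dimensional vector space over `F ∈ {ℝ,ℂ}` and let
`Ω ∈ Λ⁴V*` have length `2`.  Let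
`V₄ := {v : ∀ w, ((w ∧ v) ⌟ Ω) ∧ ((w ∧ v) ⌟ Ω) = 0}`.  Then `V₄` is a four-dimensional
subspace, there is a two-dimensional complement `V₂` with `Ω = ω₂ ∧ ω₄`, where
`ω₂ ∈ Λ²Ann(V₄)` is nonzero decomposable and `ω₄ ∈ Λ²Ann(V₂)` has length two, and the
infinitesimal stabilizer of `Ω` is the set of `f ∈ End(V)` preserving `V₄` with
`pr_{V₄} ∘ f|_{V₄} = -(tr f₂ / 2) id + f₄`, `f₄ ∈ sp(V₄, ω₄)`, `f₂ := pr_{V₂} ∘ f|_{V₂}`. -/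
theorem stmt12 {F : Type*} [RCLike F] {V : Type*} [AddCommGroup V] [Module F V]
    [FiniteDimensional F V] (hV : finrank F V = 6)
    (Ω : V [⋀^Fin 4]→ₗ[F] F) (hΩ : AltHasLen 4 2 Ω) :
    ∃ V₄ : Submodule F V,
      (V₄ : Set V) = {v : V | ∀ w x y z t : V,
          Ω ![w, v, x, y] * Ω ![w, v, z, t] - Ω ![w, v, x, z] * Ω ![w, v, y, t] +
            Ω ![w, v, x, t] * Ω ![w, v, y, z] = 0} ∧
      finrank F ↥V₄ = 4 ∧
      ∃ V₂ : Submodule F V, ∃ hc : IsCompl V₂ V₄, finrank F ↥V₂ = 2 ∧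
        ∃ ω₂ ω₄ : V → V → F,
          (∃ a b : Module.Dual F V, (∀ x ∈ V₄, a x = 0) ∧ (∀ x ∈ V₄, b x = 0) ∧
            ω₂ = fun x y => a x * b y - a y * b x) ∧
          ω₂ ≠ 0 ∧
          (∃ c₁ d₁ c₂ d₂ : Module.Dual F V,
            (∀ x ∈ V₂, c₁ x = 0) ∧ (∀ x ∈ V₂, d₁ x = 0) ∧
            (∀ x ∈ V₂, c₂ x = 0) ∧ (∀ x ∈ V₂, d₂ x = 0) ∧
            ω₄ = fun x y =>
              (c₁ x * d₁ y - c₁ y * d₁ x) + (c₂ x * d₂ y - c₂ y * d₂ x)) ∧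
          (¬ ∃ c d : Module.Dual F V, ω₄ = fun x y => c x * d y - c y * d x) ∧
          (∀ a b c d : V,
            Ω ![a, b, c, d] =
              ω₂ a b * ω₄ c d - ω₂ a c * ω₄ b d + ω₂ a d * ω₄ b c +
                ω₂ b c * ω₄ a d - ω₂ b d * ω₄ a c + ω₂ c d * ω₄ a b) ∧
          ({f : V →ₗ[F] V |
              ∀ a b c d : V,
                Ω ![f a, b, c, d] + Ω ![a, f b, c, d] + Ω ![a, b, f c, d] +
                  Ω ![a, b, c, f d] = 0} =
            {f : V →ₗ[F] V |
              (∀ x ∈ V₄, f x ∈ V₄) ∧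
              ∃ f₄ : ↥V₄ →ₗ[F] ↥V₄,
                (∀ x y : ↥V₄, ω₄ ↑(f₄ x) ↑y + ω₄ ↑x ↑(f₄ y) = 0) ∧
                ∀ x : ↥V₄,
                  (V₄.linearProjOfIsCompl V₂ hc.symm) (f ↑x) =
                    -((LinearMap.trace F ↥V₂)
                        ((V₂.linearProjOfIsCompl V₄ hc) ∘ₗ f ∘ₗ V₂.subtype) / 2) • x +
                      f₄ x}) :=
  stmt12_general hV Ω hΩ
end
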